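/- arXiv:2412.14315 — 3 statements merged into one kernel-verified Lean document; each statement's English description precedes it below -/
import Mathlib

section
/- Suppose each internal edge (v,w) appears independently with probability p_{vw} ∈ [p,p̄], each crossing edge appears independently with probability q, p ≥ q, and the gap condition n(p−q) ≥ C₀·(√(n·p̄·log n) + log n) holds for a sufficiently large universal constant C₀. Then there is a universal constant C > 0 such that for every δ ∈ (0,1), with probability at least 1 − δ, every vertex v ∈ V satisfies din[v] − dout[v] ≥ n(p−q)/2 − C·(√(np·log(n/δ)) + log(n/δ)). -/
open Matrix MeasureTheory
open scoped BigOperators ENNReal Classical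

noncomputable section

instance measSG {n : ℕ} : MeasurableSpace (SimpleGraph (Fin n)) := ⊤

variable {n : ℕ}

/-- Adjacency matrix of a graph, over `ℝ`. -/
def adjM (G : SimpleGraph (Fin n)) : Matrix (Fin n) (Fin n) ℝ :=
  Matrix.of fun v w => if G.Adj v w then 1 else 0

/-- Laplacian of a weighted adjacency matrix. -/
def wlap (W : Matrix (Fin n) (Fin n) ℝ) : Matrix (Fin n) (Fin n) ℝ :=
  Matrix.diagonal (fun v => ∑ w, W v w) - W

/-- Unnormalized Laplacian of a graph. -/
def lap (G : SimpleGraph (Fin n)) : Matrix (Fin n) (Fin n) ℝ := wlap (adjM G)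

/-- `eig M k` is the `(k+1)`-st smallest eigenvalue (root of the characteristic
polynomial, with multiplicity) of `M`; e.g. `eig M 1 = λ₂`. -/
def eig (M : Matrix (Fin n) (Fin n) ℝ) (k : ℕ) : ℝ :=
  (M.charpoly.roots.sort (· ≤ ·)).getD k 0

def IsUnitEigenvector (M : Matrix (Fin n) (Fin n) ℝ) (t : ℝ) (u : Fin n → ℝ) : Prop :=
  M.mulVec u = t • u ∧ ∑ v, (u v) ^ 2 = 1

/-- Membership in the first community `P₁ = {1, …, n/2}`. -/
def inP1 (n : ℕ) (v : Fin n) : Prop := (v : ℕ) < n / 2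

/-- `v` and `w` are in the same community. -/
def sameSide (n : ℕ) (v w : Fin n) : Prop := inP1 n v ↔ inP1 n w

/-- Number of neighbours of `v` in its own community. -/
def din (G : SimpleGraph (Fin n)) (v : Fin n) : ℕ :=
  Nat.card {w : Fin n // G.Adj v w ∧ sameSide n v w}

/-- Number of neighbours of `v` in the other community. -/
def dout (G : SimpleGraph (Fin n)) (v : Fin n) : ℕ :=
  Nat.card {w : Fin n // G.Adj v w ∧ ¬ sameSide n v w}

/-- Degree of `v`. -/
def deg (G : SimpleGraph (Fin n)) (v : Fin n) : ℕ :=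
  Nat.card {w : Fin n // G.Adj v w}

/-- `μ` samples each pair `(v,w)`, `v < w`, as an edge independently with probability `P v w`. -/
def IsEdgeProduct (P : Fin n → Fin n → ℝ) (μ : PMF (SimpleGraph (Fin n))) : Prop :=
  ∀ G : SimpleGraph (Fin n),
    μ G = ∏ e ∈ Finset.univ.filter (fun e : Fin n × Fin n => e.1 < e.2),
      (if G.Adj e.1 e.2 then ENNReal.ofReal (P e.1 e.2) else ENNReal.ofReal (1 - P e.1 e.2))

/-- The edge-probability matrix of a member of the `NSSBM(n,p,p̄,q)` family. -/
def NSSBMprob (n : ℕ) (p pbar q : ℝ) (P : Fin n → Fin n → ℝ) : Prop :=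
  (∀ v w, P v w = P w v) ∧
  (∀ v w : Fin n, v ≠ w → sameSide n v w → p ≤ P v w ∧ P v w ≤ pbar) ∧
  (∀ v w : Fin n, ¬ sameSide n v w → P v w = q)

/-- The ideal second eigenvector `u₂⋆`. -/
def u2star (n : ℕ) : Fin n → ℝ :=
  fun v => if inP1 n v then 1 / Real.sqrt n else -(1 / Real.sqrt n)

/-- Spectral bisection with matrix `M` recovers the planted partition of `G`. -/
def BisectCorrect (n : ℕ) (M : Matrix (Fin n) (Fin n) ℝ) : Prop :=
  ∀ u : Fin n → ℝ, IsUnitEigenvector M (eig M 1) u →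
    ({v : Fin n | u v < 0} = {v : Fin n | inP1 n v} ∨
     {v : Fin n | u v < 0} = {v : Fin n | ¬ inP1 n v})

/-- Off-diagonal part of the probability matrix: the expected adjacency matrix. -/
def offP (P : Fin n → Fin n → ℝ) : Matrix (Fin n) (Fin n) ℝ :=
  Matrix.of fun v w => if v = w then 0 else P v w

/-- Expected unnormalized Laplacian. -/
def expLap (P : Fin n → Fin n → ℝ) : Matrix (Fin n) (Fin n) ℝ := wlap (offP P)

/-- Euclidean norm. -/
def l2 (x : Fin n → ℝ) : ℝ := Real.sqrt (∑ v, (x v) ^ 2)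

/-- Inner product. -/
def dotp (x y : Fin n → ℝ) : ℝ := ∑ v, x v * y v

/-- Entrywise max (ℓ∞) norm. -/
def linf (x : Fin n → ℝ) : ℝ := ⨆ v, |x v|

/-- ℓ2 → ℓ2 operator norm of a matrix. -/
def opNorm (M : Matrix (Fin n) (Fin n) ℝ) : ℝ :=
  ‖LinearMap.toContinuousLinearMap (Matrix.toEuclideanLin M)‖

/-- The crossing edges of `μ` are independent `Bernoulli(q)`, while the internal
edges are arbitrary (possibly depending on the crossing edges). -/
def CrossingProduct (n : ℕ) (q : ℝ) (μ : PMF (SimpleGraph (Fin n))) : Prop :=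
  ∃ (ν : PMF (SimpleGraph (Fin n))) (κ : SimpleGraph (Fin n) → PMF (SimpleGraph (Fin n))),
    IsEdgeProduct (fun v w => if sameSide n v w then 0 else q) ν ∧
    (∀ H, ∀ G ∈ (κ H).support, ∀ v w, ¬ sameSide n v w → ((G.Adj v w) ↔ H.Adj v w)) ∧
    μ = ν.bind κ

/-- The ordered pairs `(a, b)` with `a < b`, one for each potential edge. -/
def edgePairs (n : ℕ) : Finset (Fin n × Fin n) :=
  Finset.univ.filter fun e : Fin n × Fin n => e.1 < e.2

/-- `1` for vertices on the side of `v`, `-1` for vertices on the other side. -/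
def sideSign (v w : Fin n) : ℝ := if sameSide n v w then 1 else -1

/-- Extends a function `h` on the neighbours of `v` to a function on pairs that is supported on
the pairs containing `v`. -/
def starExtend (v : Fin n) (h : Fin n → ℝ) (e : Fin n × Fin n) : ℝ :=
  if e.1 = v then h e.2 else if e.2 = v then h e.1 else 0

lemma sum_edgePairs_starExtend (v : Fin n) (h : Fin n → ℝ) :
    ∑ e ∈ edgePairs n, starExtend v h e = ∑ w, if w = v then 0 else h w := by
  have key : ∀ a b : Fin n, (if a < b then starExtend v h (a, b) else 0) =
      (if a = v then (if v < b then h b else 0) else 0) +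
        (if b = v then (if a < v then h a else 0) else 0) := by
    intro a b
    unfold starExtend
    by_cases ha : a = v <;> by_cases hb : b = v <;> simp [ha, hb]
  rw [edgePairs, Finset.sum_filter, Fintype.sum_prod_type]
  simp only [key, Finset.sum_add_distrib, Finset.sum_ite_eq', Finset.mem_univ, if_true]
  rw [Finset.sum_comm]
  simp only [Finset.sum_ite_eq', Finset.mem_univ, if_true]
  rw [← Finset.sum_add_distrib]
  refine Finset.sum_congr rfl fun w _ => ?_
  rcases lt_trichotomy w v with hw | hw | hw
  · simp [hw, hw.ne, hw.not_gt]
  · simp [hw]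
  · simp [hw, hw.ne', hw.not_gt]

lemma sum_graph_prod_edgePairs (a b : Fin n × Fin n → ℝ) :
    ∑ G : SimpleGraph (Fin n), ∏ e ∈ edgePairs n, (if G.Adj e.1 e.2 then a e else b e) =
      ∏ e ∈ edgePairs n, (a e + b e) := by
  rw [Finset.prod_add]
  refine Finset.sum_bij' (fun G _ => (edgePairs n).filter fun e => G.Adj e.1 e.2)
    (fun t _ => SimpleGraph.fromRel fun x y => (x, y) ∈ t) ?_ ?_ ?_ ?_ ?_
  · intro G _
    simp
  · intro t _
    simp
  · intro G _
    ext x y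
    simp only [SimpleGraph.fromRel_adj, Finset.mem_filter, edgePairs, Finset.mem_univ, true_and]
    constructor
    · rintro ⟨-, h | h⟩
      · exact h.2
      · exact h.2.symm
    · intro h
      refine ⟨h.ne, ?_⟩
      rcases lt_or_gt_of_ne h.ne with hlt | hlt
      · exact Or.inl ⟨hlt, h⟩
      · exact Or.inr ⟨hlt, h.symm⟩
  · intro t ht
    rw [Finset.mem_powerset] at ht
    ext ⟨x, y⟩
    simp only [SimpleGraph.fromRel_adj, Finset.mem_filter]
    constructor
    · rintro ⟨hxy, -, h | h⟩
      · exact h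
      · have h1 : x < y := by simpa [edgePairs] using hxy
        have h2 : y < x := by simpa [edgePairs] using ht h
        exact absurd h1 h2.not_gt
    · intro h
      have h1 : x < y := by simpa [edgePairs] using ht h
      exact ⟨ht h, h1.ne, Or.inl h⟩
  · intro G _
    rw [Finset.prod_ite, Finset.filter_not]

lemma din_sub_dout_eq (G : SimpleGraph (Fin n)) (v : Fin n) :
    (din G v : ℝ) - dout G v =
      ∑ e ∈ edgePairs n, if G.Adj e.1 e.2 then starExtend v (sideSign v) e else 0 := by
  have h1 : ∀ e : Fin n × Fin n, (if G.Adj e.1 e.2 then starExtend v (sideSign v) e else 0) =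
      starExtend v (fun w => if G.Adj v w then sideSign v w else 0) e := by
    rintro ⟨a, b⟩
    unfold starExtend
    by_cases ha : a = v
    · subst ha; simp
    · by_cases hb : b = v
      · subst hb; simp [ha, G.adj_comm b a]
      · simp [ha, hb]
  simp only [h1, sum_edgePairs_starExtend]
  rw [din, dout, Nat.card_eq_fintype_card, Nat.card_eq_fintype_card, Fintype.card_subtype,
    Fintype.card_subtype, Finset.card_filter, Finset.card_filter]
  push_cast
  rw [← Finset.sum_sub_distrib]
  refine Finset.sum_congr rfl fun w _ => ?_
  by_cases hw : w = v
  · subst hw; simp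
  · by_cases hA : G.Adj v w <;> by_cases hs : sameSide n v w <;> simp [hw, hA, hs, sideSign]

lemma card_not_sameSide (hn : Even n) (v : Fin n) :
    ((Finset.univ.filter fun w : Fin n => ¬ sameSide n v w).card : ℝ) = n / 2 := by
  obtain ⟨m, hm⟩ := hn
  have hhalf : n / 2 = m := by omega
  have h1 : (Finset.univ.filter fun w : Fin n => inP1 n w).card = m := by
    simp only [inP1, hhalf]
    rw [Fin.card_filter_val_lt]
    omega
  have h2 : (Finset.univ.filter fun w : Fin n => ¬ inP1 n w).card = m := by
    have := Finset.card_filter_add_card_filter_not (s := (Finset.univ : Finset (Fin n)))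
      (fun w => inP1 n w)
    simp only [Finset.card_univ, Fintype.card_fin] at this
    omega
  have h3 : (Finset.univ.filter fun w : Fin n => ¬ sameSide n v w).card = m := by
    by_cases hv : inP1 n v
    · simpa [sameSide, hv] using h2
    · simpa [sameSide, hv] using h1
  rw [h3, hm]
  push_cast
  ring

lemma card_sameSide (hn : Even n) (v : Fin n) :
    ((Finset.univ.filter fun w : Fin n => sameSide n v w).card : ℝ) = n / 2 := by
  have h1 := Finset.card_filter_add_card_filter_not (s := (Finset.univ : Finset (Fin n)))
    (fun w => sameSide n v w)
  simp only [Finset.card_univ, Fintype.card_fin] at h1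
  have h2 := card_not_sameSide hn v
  have h3 : ((Finset.univ.filter fun w : Fin n => sameSide n v w).card : ℝ) +
      ((Finset.univ.filter fun w : Fin n => ¬ sameSide n v w).card : ℝ) = n := by
    exact_mod_cast h1
  linarith

lemma NSSBMprob.mem_Icc {p pbar q : ℝ} {P : Fin n → Fin n → ℝ} (hP : NSSBMprob n p pbar q P)
    (hq : 0 ≤ q) (hqp : q ≤ p) (hpp : p ≤ pbar) (hpb : pbar ≤ 1) {v w : Fin n} (hvw : v ≠ w) :
    P v w ∈ Set.Icc (0 : ℝ) 1 := by
  by_cases hs : sameSide n v w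
  · have := hP.2.1 v w hvw hs
    exact ⟨by linarith [this.1], by linarith [this.2]⟩
  · rw [hP.2.2 v w hs]
    exact ⟨hq, by linarith⟩

lemma exp_neg_le_quadratic {s : ℝ} (h0 : 0 ≤ s) (h1 : s ≤ 1) : Real.exp (-s) ≤ 1 - s + s ^ 2 := by
  have h := Real.abs_exp_sub_one_sub_id_le (x := -s) (by rw [abs_neg, abs_of_nonneg h0]; exact h1)
  have := (abs_le.1 h).2
  nlinarith

lemma exp_le_quadratic {s : ℝ} (h0 : 0 ≤ s) (h1 : s ≤ 1) : Real.exp s ≤ 1 + s + s ^ 2 := by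
  have h := Real.abs_exp_sub_one_sub_id_le (x := s) (by rw [abs_of_nonneg h0]; exact h1)
  have := (abs_le.1 h).2
  linarith

/-- Bound on the logarithm of the moment generating function of `dout - din`. -/
lemma sum_log_mgf_le (hn : Even n) {p pbar q s : ℝ} (hq : 0 ≤ q) (hqp : q ≤ p)
    {P : Fin n → Fin n → ℝ} (hP : NSSBMprob n p pbar q P) (hs0 : 0 ≤ s) (hs1 : s ≤ 1)
    (v : Fin n) :
    (∑ w, if w = v then 0 else P v w * (Real.exp (-s * sideSign v w) - 1)) ≤
      -s * (n * (p - q) / 2) + s * p + s ^ 2 * (n * p) := by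
  have hx : Real.exp (-s) ≤ 1 := Real.exp_le_one_iff.2 (by linarith)
  have hx' : 1 - s ≤ Real.exp (-s) := by linarith [Real.add_one_le_exp (-s)]
  have hp : 0 ≤ p := hq.trans hqp
  have hterm : ∀ w, (if w = v then 0 else P v w * (Real.exp (-s * sideSign v w) - 1)) ≤
      (if sameSide n v w then p * (Real.exp (-s) - 1) else 0) +
        (if ¬ sameSide n v w then q * (Real.exp s - 1) else 0) +
        (if w = v then p * (1 - Real.exp (-s)) else 0) := by
    intro w
    by_cases hw : w = v
    · subst hw
      simp only [sameSide, if_true, not_true_eq_false, if_false]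
      linarith
    · by_cases hs : sameSide n v w
      · have := (hP.2.1 v w (Ne.symm hw) hs).1
        simp only [hw, hs, sideSign, if_true, if_false, not_true_eq_false, mul_one, add_zero]
        exact mul_le_mul_of_nonpos_right this (by linarith)
      · simp [hw, hs, sideSign, hP.2.2 v w hs]
  refine (Finset.sum_le_sum fun w _ => hterm w).trans ?_
  rw [Finset.sum_add_distrib, Finset.sum_add_distrib, ← Finset.sum_filter, ← Finset.sum_filter,
    Finset.sum_const, Finset.sum_const, nsmul_eq_mul, nsmul_eq_mul, card_sameSide hn,
    card_not_sameSide hn, Finset.sum_ite_eq' Finset.univ v, if_pos (Finset.mem_univ v)]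
  have e1 : (n : ℝ) / 2 * (p * (Real.exp (-s) - 1)) ≤ n / 2 * (p * (-s + s ^ 2)) := by
    gcongr
    linarith [exp_neg_le_quadratic hs0 hs1]
  have e2 : (n : ℝ) / 2 * (q * (Real.exp s - 1)) ≤ n / 2 * (q * (s + s ^ 2)) := by
    gcongr
    linarith [exp_le_quadratic hs0 hs1]
  have e3 : p * (1 - Real.exp (-s)) ≤ p * s := by
    gcongr
    linarith
  have e4 : (n : ℝ) / 2 * (q * s ^ 2) ≤ n / 2 * (p * s ^ 2) := by gcongr
  nlinarith

/-- Chernoff bound for the lower tail of `din - dout`. -/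
lemma toMeasure_din_sub_dout_lt_le (hn : Even n) {p pbar q s : ℝ} (hq : 0 ≤ q) (hqp : q ≤ p)
    (hpp : p ≤ pbar) (hpb : pbar ≤ 1) {P : Fin n → Fin n → ℝ} {μ : PMF (SimpleGraph (Fin n))}
    (hP : NSSBMprob n p pbar q P) (hμ : IsEdgeProduct P μ) (hs0 : 0 ≤ s) (hs1 : s ≤ 1)
    (v : Fin n) (t : ℝ) :
    μ.toMeasure {G | (din G v : ℝ) - dout G v < n * (p - q) / 2 - t} ≤
      ENNReal.ofReal (Real.exp (-s * t + s * p + s ^ 2 * (n * p))) := by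
  have hE : ∀ e ∈ edgePairs n, P e.1 e.2 ∈ Set.Icc (0 : ℝ) 1 := fun e he =>
    hP.mem_Icc hq hqp hpp hpb (by simpa [edgePairs] using he : e.1 < e.2).ne
  set W : SimpleGraph (Fin n) → ℝ := fun G =>
    ∏ e ∈ edgePairs n, if G.Adj e.1 e.2 then P e.1 e.2 else 1 - P e.1 e.2 with hW
  have hfac : ∀ G : SimpleGraph (Fin n), ∀ e ∈ edgePairs n,
      0 ≤ (if G.Adj e.1 e.2 then P e.1 e.2 else 1 - P e.1 e.2) := by
    intro G e he
    have := hE e he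
    split_ifs
    · exact this.1
    · linarith [this.2]
  have hW0 : ∀ G, 0 ≤ W G := fun G => Finset.prod_nonneg (hfac G)
  have hμW : ∀ G, μ G = ENNReal.ofReal (W G) := by
    intro G
    rw [hμ G, hW, ENNReal.ofReal_prod_of_nonneg (hfac G)]
    refine Finset.prod_congr rfl fun e _ => ?_
    split_ifs <;> rfl
  set T : ℝ := n * (p - q) / 2 - t with hT
  have hmgf : ∑ G, W G * Real.exp (-s * ((din G v : ℝ) - dout G v)) ≤
      Real.exp (-s * (n * (p - q) / 2) + s * p + s ^ 2 * (n * p)) := by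
    have h1 : ∀ G : SimpleGraph (Fin n), W G * Real.exp (-s * ((din G v : ℝ) - dout G v)) =
        ∏ e ∈ edgePairs n, if G.Adj e.1 e.2
          then P e.1 e.2 * Real.exp (-s * starExtend v (sideSign v) e) else 1 - P e.1 e.2 := by
      intro G
      rw [din_sub_dout_eq, Finset.mul_sum, Real.exp_sum, hW, ← Finset.prod_mul_distrib]
      refine Finset.prod_congr rfl fun e _ => ?_
      split_ifs <;> simp
    rw [Finset.sum_congr rfl fun G _ => h1 G,
      sum_graph_prod_edgePairs (fun e => P e.1 e.2 * Real.exp (-s * starExtend v (sideSign v) e))]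
    have h2 : ∀ e : Fin n × Fin n, P e.1 e.2 * (Real.exp (-s * starExtend v (sideSign v) e) - 1) =
        starExtend v (fun w => P v w * (Real.exp (-s * sideSign v w) - 1)) e := by
      rintro ⟨a, b⟩
      unfold starExtend
      by_cases ha : a = v
      · subst ha; simp
      · by_cases hb : b = v
        · subst hb; simp [ha, hP.1 a b]
        · simp [ha, hb]
    calc _ ≤ ∏ e ∈ edgePairs n,
          Real.exp (P e.1 e.2 * (Real.exp (-s * starExtend v (sideSign v) e) - 1)) := by
          refine Finset.prod_le_prod (fun e he => ?_) fun e _ => ?_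
          · have := hE e he
            exact add_nonneg (mul_nonneg this.1 (Real.exp_pos _).le) (by linarith [this.2])
          · refine le_trans (le_of_eq ?_) (Real.add_one_le_exp _)
            ring
      _ = Real.exp (∑ w, if w = v then 0 else P v w * (Real.exp (-s * sideSign v w) - 1)) := by
          rw [← Real.exp_sum, ← sum_edgePairs_starExtend]
          simp only [h2]
      _ ≤ _ := Real.exp_le_exp.2 (sum_log_mgf_le hn hq hqp hP hs0 hs1 v)
  calc μ.toMeasure {G | (din G v : ℝ) - dout G v < T}
      = ∑ G, Set.indicator {G | (din G v : ℝ) - dout G v < T} μ G := by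
        rw [PMF.toMeasure_apply_fintype]
    _ ≤ ∑ G, ENNReal.ofReal
          (Real.exp (s * T) * (W G * Real.exp (-s * ((din G v : ℝ) - dout G v)))) := by
        refine Finset.sum_le_sum fun G _ => ?_
        by_cases hG : (din G v : ℝ) - dout G v < T
        · rw [Set.indicator_of_mem (by exact hG), hμW]
          refine ENNReal.ofReal_le_ofReal ?_
          rw [mul_left_comm, ← Real.exp_add]
          refine le_mul_of_one_le_right (hW0 G) (Real.one_le_exp ?_)
          nlinarith
        · rw [Set.indicator_of_notMem (by exact hG)]
          exact zero_le
    _ = ENNReal.ofReal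
          (Real.exp (s * T) * ∑ G, W G * Real.exp (-s * ((din G v : ℝ) - dout G v))) := by
        rw [Finset.mul_sum, ENNReal.ofReal_sum_of_nonneg]
        intro G _
        have := hW0 G
        positivity
    _ ≤ ENNReal.ofReal (Real.exp (s * T) *
          Real.exp (-s * (n * (p - q) / 2) + s * p + s ^ 2 * (n * p))) := by
        gcongr
    _ = _ := by
        rw [← Real.exp_add, hT]
        congr 2
        ring

lemma exists_chernoff_parameter {a p L : ℝ} (ha : 0 ≤ a) (hp : p ≤ 1) (hL : 1 / 2 ≤ L) :
    ∃ s : ℝ, 0 ≤ s ∧ s ≤ 1 ∧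
      -s * (4 * (Real.sqrt (a * L) + L)) + s * p + s ^ 2 * a ≤ -L := by
  have hL0 : 0 < L := by linarith
  rcases le_or_gt a L with h | h
  · exact ⟨1, zero_le_one, le_rfl, by linarith [Real.sqrt_nonneg (a * L)]⟩
  · have ha0 : 0 < a := hL0.trans h
    have hsa := Real.sqrt_pos.2 ha0
    have hsL := Real.sqrt_pos.2 hL0
    refine ⟨Real.sqrt L / Real.sqrt a, by positivity,
      (div_le_one hsa).2 (Real.sqrt_le_sqrt h.le), ?_⟩
    set s := Real.sqrt L / Real.sqrt a with hs
    have hs0 : 0 ≤ s := by positivity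
    have e1 : s * Real.sqrt (a * L) = L := by
      rw [Real.sqrt_mul ha, hs]
      field_simp
      exact Real.sq_sqrt hL0.le
    have e2 : s ^ 2 * a = L := by
      rw [hs, div_pow, Real.sq_sqrt hL0.le, Real.sq_sqrt ha]
      field_simp
    have e3 : s * p ≤ s * (4 * L) := by gcongr; linarith
    linarith

/-- **Lemma (gap between internal and crossing degrees).**
In the NSSBM setting with `p ≥ q` and the gap condition
`n(p-q) ≥ C₀(√(n p̄ log n) + log n)` for a sufficiently large universal constant `C₀`,
there is a universal constant `C > 0` such that for every `δ ∈ (0,1)`, with probability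
at least `1 - δ`, every vertex `v` satisfies
`din[v] - dout[v] ≥ n(p-q)/2 - C(√(np log(n/δ)) + log(n/δ))`. -/
theorem din_minus_dout_lower_bound :
    ∃ C0 : ℝ, 0 < C0 ∧ ∃ C : ℝ, 0 < C ∧ ∀ n : ℕ, Even n →
      ∀ p pbar q δ : ℝ, 0 ≤ q → q ≤ p → p ≤ pbar → pbar ≤ 1 → 0 < δ → δ < 1 →
      ∀ (P : Fin n → Fin n → ℝ) (μ : PMF (SimpleGraph (Fin n))),
        NSSBMprob n p pbar q P → IsEdgeProduct P μ →
        C0 * (Real.sqrt ((n : ℝ) * pbar * Real.log n) + Real.log n) ≤ (n : ℝ) * (p - q) →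
        1 - ENNReal.ofReal δ ≤ μ.toMeasure {G |
          ∀ v : Fin n,
            (n : ℝ) * (p - q) / 2 -
                C * (Real.sqrt ((n : ℝ) * p * Real.log (n / δ)) + Real.log (n / δ)) ≤
              (din G v : ℝ) - (dout G v : ℝ)} := by
  refine ⟨1, one_pos, 4, by norm_num, ?_⟩
  intro n hn p pbar q δ hq hqp hpp hpb hδ hδ1 P μ hP hμ _
  rcases Nat.eq_zero_or_pos n with rfl | hn0
  · have huniv : {G : SimpleGraph (Fin 0) | ∀ v : Fin 0,
        ((0 : ℕ) : ℝ) * (p - q) / 2 -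
            4 * (Real.sqrt (((0 : ℕ) : ℝ) * p * Real.log (((0 : ℕ) : ℝ) / δ)) +
              Real.log (((0 : ℕ) : ℝ) / δ)) ≤ (din G v : ℝ) - (dout G v : ℝ)} = Set.univ :=
      Set.eq_univ_of_forall fun G v => v.elim0
    rw [huniv, measure_univ]
    exact tsub_le_self
  have hn2 : (2 : ℝ) ≤ n := by
    obtain ⟨m, hm⟩ := hn
    exact_mod_cast (by omega : 2 ≤ n)
  have hnpos : (0 : ℝ) < n := by linarith
  have hp : 0 ≤ p := hq.trans hqp
  set L := Real.log (n / δ) with hL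
  have hL2 : 1 / 2 ≤ L := by
    have h2 : (2 : ℝ) ≤ n / δ := by
      rw [le_div_iff₀ hδ]
      nlinarith
    have := Real.log_le_log two_pos h2
    linarith [Real.log_two_gt_d9]
  obtain ⟨s, hs0, hs1, hs⟩ :=
    exists_chernoff_parameter (a := n * p) (p := p) (by positivity) (hpp.trans hpb) hL2
  set t := 4 * (Real.sqrt (n * p * L) + L) with ht
  have hbad : ∀ v : Fin n, μ.toMeasure {G | (din G v : ℝ) - dout G v < n * (p - q) / 2 - t} ≤
      ENNReal.ofReal (δ / n) := by
    intro v
    refine (toMeasure_din_sub_dout_lt_le hn hq hqp hpp hpb hP hμ hs0 hs1 v t).trans ?_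
    refine ENNReal.ofReal_le_ofReal ((Real.exp_le_exp.2 hs).trans (le_of_eq ?_))
    rw [Real.exp_neg, hL, Real.exp_log (by positivity), inv_div]
  have hunion : μ.toMeasure (⋃ v : Fin n,
      {G | (din G v : ℝ) - dout G v < n * (p - q) / 2 - t}) ≤ ENNReal.ofReal δ := by
    refine (measure_iUnion_fintype_le _ _).trans ((Finset.sum_le_sum fun v _ => hbad v).trans ?_)
    rw [← ENNReal.ofReal_sum_of_nonneg fun _ _ => by positivity]
    simp [mul_div_cancel₀ _ hnpos.ne']
  have hcompl : {G : SimpleGraph (Fin n) | ∀ v : Fin n,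
      n * (p - q) / 2 - t ≤ (din G v : ℝ) - (dout G v : ℝ)} =
      (⋃ v : Fin n, {G | (din G v : ℝ) - dout G v < n * (p - q) / 2 - t})ᶜ := by
    ext G
    simp
  rw [hcompl, prob_compl_eq_one_sub MeasurableSpace.measurableSet_top]
  exact tsub_le_tsub_left hunion 1

end
end

section
/- Suppose the crossing edges of G appear independently, each with probability q (the internal edges may be arbitrary). Then there is a universal constant C > 0 such that for every δ ∈ (0,1), with probability at least 1 − δ, every vertex v ∈ V satisfies λ2 ≤ 2·dout[v] + C·(√(nq·log(n/δ)) + log(n/δ)), where λ2 is the second smallest eigenvalue of the unnormalized Laplacian L of G. -/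
open Matrix MeasureTheory
open scoped BigOperators ENNReal Classical

noncomputable section

variable {n : ℕ}

/-- At most one element of a multiset is smaller than its second smallest element. -/
theorem countP_lt_sort_getD_one_le (s : Multiset ℝ) (hs : 2 ≤ s.card) :
    s.countP (· < (s.sort (· ≤ ·)).getD 1 0) ≤ 1 := by
  have hp := s.pairwise_sort (· ≤ ·)
  have hl : (s.sort (· ≤ ·)).length = s.card := s.length_sort (· ≤ ·)
  rw [show s.countP (· < (s.sort (· ≤ ·)).getD 1 0)
      = (s.sort (· ≤ ·) : Multiset ℝ).countP (· < (s.sort (· ≤ ·)).getD 1 0) by rw [s.sort_eq]]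
  rcases h : s.sort (· ≤ ·) with _ | ⟨a, _ | ⟨b, l⟩⟩
  · simp
  · simp [h] at hl; omega
  · rw [h] at hp
    have hb : (b :: l).countP (· < b) = 0 := by
      rw [List.countP_eq_zero]
      intro x hx
      rcases List.mem_cons.1 hx with rfl | hx
      · simp
      · simpa using (List.pairwise_cons.1 (List.pairwise_cons.1 hp).2).1 x hx
    simp only [Multiset.coe_countP, List.getD_cons_succ, List.getD_cons_zero]
    rw [List.countP_cons, hb]
    split_ifs <;> simp

theorem exists_forall_ne_eig_one_le {M : Matrix (Fin n) (Fin n) ℝ} (hM : M.IsHermitian)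
    (hn : 2 ≤ n) : ∃ i₀, ∀ i ≠ i₀, eig M 1 ≤ hM.eigenvalues i := by
  have hr := hM.roots_charpoly_eq_eigenvalues
  have h := countP_lt_sort_getD_one_le M.charpoly.roots (by rw [hr]; simpa using hn)
  change M.charpoly.roots.countP (· < eig M 1) ≤ 1 at h
  rw [hr, Multiset.countP_map, ← Finset.filter_val, Finset.card_val, Finset.card_le_one] at h
  by_cases hex : ∃ i, hM.eigenvalues i < eig M 1
  · obtain ⟨i₀, hi₀⟩ := hex
    refine ⟨i₀, fun i hi => ?_⟩
    by_contra hlt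
    exact hi (h i (by simpa using hlt) i₀ (by simpa using hi₀))
  · push Not at hex
    exact ⟨⟨0, by omega⟩, fun i _ => hex i⟩

theorem dotProduct_self_eq_sum_sq (b : OrthonormalBasis (Fin n) ℝ (EuclideanSpace ℝ (Fin n)))
    (x : Fin n → ℝ) : x ⬝ᵥ x = ∑ i, ((b i : Fin n → ℝ) ⬝ᵥ x) ^ 2 := by
  have h := b.sum_inner_mul_inner (WithLp.toLp 2 x) (WithLp.toLp 2 x)
  simp only [EuclideanSpace.inner_eq_star_dotProduct, star_trivial] at h
  rw [← h]
  refine Finset.sum_congr rfl fun i _ => ?_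
  rw [sq, dotProduct_comm x]

theorem dotProduct_mulVec_eq_sum_eigenvalues {M : Matrix (Fin n) (Fin n) ℝ}
    (hM : M.IsHermitian) (x : Fin n → ℝ) :
    x ⬝ᵥ M *ᵥ x =
      ∑ i, hM.eigenvalues i * ((hM.eigenvectorBasis i : Fin n → ℝ) ⬝ᵥ x) ^ 2 := by
  have h := hM.eigenvectorBasis.sum_inner_mul_inner (WithLp.toLp 2 x) (WithLp.toLp 2 (M *ᵥ x))
  simp only [EuclideanSpace.inner_eq_star_dotProduct, star_trivial] at h
  rw [dotProduct_comm, ← h]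
  refine Finset.sum_congr rfl fun i _ => ?_
  have hMt : Mᵀ = M := by simpa only [conjTranspose_eq_transpose_of_trivial] using hM.eq
  have hi : (hM.eigenvectorBasis i : Fin n → ℝ) ⬝ᵥ M *ᵥ x
      = hM.eigenvalues i * ((hM.eigenvectorBasis i : Fin n → ℝ) ⬝ᵥ x) := by
    rw [dotProduct_mulVec, ← mulVec_transpose, hMt, hM.mulVec_eigenvectorBasis, smul_dotProduct,
      smul_eq_mul]
  rw [dotProduct_comm (M *ᵥ x), hi]
  ring

/-- The second smallest eigenvalue is at most any bound for the Rayleigh quotient on a plane. -/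
theorem eig_one_le_of_forall_plane {M : Matrix (Fin n) (Fin n) ℝ} (hM : M.IsHermitian)
    (hn : 2 ≤ n) {u w : Fin n → ℝ} {r : ℝ}
    (hind : ∀ a b : ℝ, a • u + b • w = 0 → a = 0 ∧ b = 0)
    (h : ∀ a b : ℝ, (a • u + b • w) ⬝ᵥ M *ᵥ (a • u + b • w)
      ≤ r * ((a • u + b • w) ⬝ᵥ (a • u + b • w))) :
    eig M 1 ≤ r := by
  obtain ⟨i₀, hi₀⟩ := exists_forall_ne_eig_one_le hM hn
  set e : Fin n → ℝ := (hM.eigenvectorBasis i₀).ofLp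
  obtain ⟨a, b, hab, hx⟩ : ∃ a b : ℝ, (a ≠ 0 ∨ b ≠ 0) ∧ e ⬝ᵥ (a • u + b • w) = 0 := by
    by_cases hz : e ⬝ᵥ u = 0
    · exact ⟨1, 0, by simp, by simp [hz]⟩
    · refine ⟨-(e ⬝ᵥ w), e ⬝ᵥ u, Or.inr hz, ?_⟩
      simp only [dotProduct_add, dotProduct_smul, smul_eq_mul]
      ring
  set x := a • u + b • w
  have hx0 : x ≠ 0 := fun h0 => by
    have := hind a b h0
    tauto
  have hpos : 0 < x ⬝ᵥ x := by
    simpa using dotProduct_star_self_pos_iff.2 hx0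
  have hlow : eig M 1 * (x ⬝ᵥ x) ≤ x ⬝ᵥ M *ᵥ x := by
    rw [dotProduct_mulVec_eq_sum_eigenvalues hM, dotProduct_self_eq_sum_sq hM.eigenvectorBasis,
      Finset.mul_sum]
    refine Finset.sum_le_sum fun i _ => ?_
    by_cases hi : i = i₀
    · subst hi
      rw [hx]
      simp
    · exact mul_le_mul_of_nonneg_right (hi₀ i hi) (sq_nonneg _)
  exact le_of_mul_le_mul_right (hlow.trans (h a b)) hpos

theorem lap_eq_lapMatrix (G : SimpleGraph (Fin n)) : lap G = G.lapMatrix ℝ := by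
  ext i j
  simp [lap, wlap, adjM, SimpleGraph.lapMatrix, SimpleGraph.degMatrix, SimpleGraph.adjMatrix_apply,
    SimpleGraph.degree_eq_sum_if_adj]

/-- The number of crossing edges of `G`. -/
def crossCount (G : SimpleGraph (Fin n)) : ℝ :=
  ∑ x, ∑ y, if inP1 n x ∧ ¬ inP1 n y then (if G.Adj x y then 1 else 0) else 0

theorem crossCount_nonneg (G : SimpleGraph (Fin n)) : 0 ≤ crossCount G :=
  Finset.sum_nonneg fun _ _ => Finset.sum_nonneg fun _ _ => by split_ifs <;> simp

theorem sum_ite_inP1 (hn : Even n) : ∑ x, (if inP1 n x then (1 : ℝ) else 0) = n / 2 := by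
  obtain ⟨k, rfl⟩ := hn
  have h2 : (k + k) / 2 = k := by omega
  simp only [inP1, h2, Fin.sum_univ_eq_sum_range (fun i => if i < k then (1 : ℝ) else 0),
    Finset.sum_range_add]
  rw [Finset.sum_congr rfl fun x hx => if_pos (Finset.mem_range.1 hx)]
  simp

theorem dotProduct_lap_mulVec_sides (G : SimpleGraph (Fin n)) (a b : ℝ) :
    (a • (fun _ => 1) + b • (fun v => if inP1 n v then 1 else -1)) ⬝ᵥ
      lap G *ᵥ (a • (fun _ => 1) + b • (fun v => if inP1 n v then 1 else -1))
      = 4 * b ^ 2 * crossCount G := by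
  have hsymm : crossCount G =
      ∑ x, ∑ y, if inP1 n y ∧ ¬ inP1 n x then (if G.Adj x y then 1 else 0) else 0 := by
    rw [crossCount, Finset.sum_comm]
    simp only [G.adj_comm]
  rw [lap_eq_lapMatrix, ← toLinearMap₂'_apply', SimpleGraph.lapMatrix_toLinearMap₂',
    show 4 * b ^ 2 * crossCount G = (4 * b ^ 2 * (crossCount G + crossCount G)) / 2 by ring]
  nth_rw 2 [hsymm]
  simp only [crossCount, ← Finset.sum_add_distrib, Finset.mul_sum]
  congr 1
  refine Finset.sum_congr rfl fun x _ => Finset.sum_congr rfl fun y _ => ?_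
  by_cases hA : G.Adj x y <;> by_cases hx : inP1 n x <;> by_cases hy : inP1 n y <;>
    simp [hA, hx, hy] <;> ring

theorem eig_one_lap_le_crossCount (G : SimpleGraph (Fin n)) (hn : Even n) (hn2 : 2 ≤ n) :
    eig (lap G) 1 ≤ 4 / n * crossCount G := by
  have hn0 : (0 : ℝ) < n := by positivity
  have hM : (lap G).IsHermitian := lap_eq_lapMatrix G ▸ SimpleGraph.isHermitian_lapMatrix ℝ G
  refine eig_one_le_of_forall_plane hM hn2 (u := fun _ => 1)
    (w := fun v => if inP1 n v then 1 else -1) (fun a b h => ?_) fun a b => ?_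
  · have h0 := congrFun h ⟨0, by omega⟩
    have h1 := congrFun h ⟨n - 1, by omega⟩
    have hl : ¬ n - 1 < n / 2 := by omega
    have hp : 0 < n / 2 := by omega
    simp [inP1, hl, hp] at h0 h1
    constructor <;> linarith
  · rw [dotProduct_lap_mulVec_sides]
    have hs : (a • (fun _ : Fin n => (1 : ℝ)) + b • (fun v => if inP1 n v then 1 else -1)) ⬝ᵥ
        (a • (fun _ => 1) + b • (fun v => if inP1 n v then 1 else -1)) = n * (a ^ 2 + b ^ 2) := by
      have : ∀ v : Fin n, (a + b * if inP1 n v then 1 else -1) *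
          (a + b * if inP1 n v then 1 else -1)
          = (a - b) ^ 2 + 4 * a * b * if inP1 n v then 1 else 0 := fun v => by
        split_ifs <;> ring
      simp only [dotProduct, Pi.add_apply, Pi.smul_apply, smul_eq_mul, mul_one, this,
        Finset.sum_add_distrib, ← Finset.mul_sum, sum_ite_inP1 hn]
      simp
      ring
    rw [hs, show 4 / (n : ℝ) * crossCount G * (n * (a ^ 2 + b ^ 2))
      = 4 * (a ^ 2 + b ^ 2) * crossCount G by field_simp]
    exact mul_le_mul_of_nonneg_right (by nlinarith [sq_nonneg a]) (crossCount_nonneg G)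

theorem sum_lt_not_sameSide (f : Fin n × Fin n → ℝ) :
    ∑ e ∈ Finset.univ.filter (fun e : Fin n × Fin n => e.1 < e.2),
      (if sameSide n e.1 e.2 then 0 else f e) =
    ∑ x, ∑ y, if inP1 n x ∧ ¬ inP1 n y then f (x, y) else 0 := by
  rw [← Fintype.sum_prod_type' (f := fun x y => if inP1 n x ∧ ¬ inP1 n y then f (x, y) else 0),
    Finset.sum_filter]
  refine Finset.sum_congr rfl fun e _ => ?_
  have h1 : inP1 n e.1 → ¬ inP1 n e.2 → e.1 < e.2 := by
    simp only [inP1, Fin.lt_def]; omega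
  have h2 : ¬ inP1 n e.1 → inP1 n e.2 → ¬ e.1 < e.2 := by
    simp only [inP1, Fin.lt_def]; omega
  by_cases hx : inP1 n e.1 <;> by_cases hy : inP1 n e.2 <;> simp_all [sameSide]

/-- The coefficient of the crossing pair `e` in `4 / n * crossCount - 2 * dout v`. -/
def crossWeight (v : Fin n) (e : Fin n × Fin n) : ℝ :=
  4 / n - 2 * ((if e.1 = v then 1 else 0) + (if e.2 = v then 1 else 0))

/-- The excess of `4 / n * crossCount` over twice the number of crossing neighbours of `v`. -/
def crossExcess (v : Fin n) (G : SimpleGraph (Fin n)) : ℝ :=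
  4 / n * crossCount G - 2 * dout G v

theorem dout_eq_sum (G : SimpleGraph (Fin n)) (v : Fin n) :
    (dout G v : ℝ) = ∑ x, ∑ y, if inP1 n x ∧ ¬ inP1 n y then
      (if G.Adj x y then (if x = v then 1 else 0) + (if y = v then 1 else 0) else 0) else 0 := by
  have hL : (dout G v : ℝ) =
      ∑ w, ((if inP1 n v ∧ ¬ inP1 n w then (if G.Adj v w then 1 else 0) else 0) +
        (if inP1 n w ∧ ¬ inP1 n v then (if G.Adj w v then 1 else 0) else 0)) := by
    rw [dout, Nat.card_eq_fintype_card, Fintype.card_subtype, Finset.card_filter, Nat.cast_sum]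
    refine Finset.sum_congr rfl fun w _ => ?_
    rw [G.adj_comm w v]
    by_cases hA : G.Adj v w <;> by_cases hx : inP1 n v <;> by_cases hy : inP1 n w <;>
      simp [hA, hx, hy, sameSide]
  have hR : ∀ x y, (if inP1 n x ∧ ¬ inP1 n y then
      (if G.Adj x y then (if x = v then (1 : ℝ) else 0) + (if y = v then 1 else 0) else 0) else 0)
      = (if x = v then
          (if inP1 n x ∧ ¬ inP1 n y then (if G.Adj x y then 1 else 0) else 0) else 0) +
        (if y = v then
          (if inP1 n x ∧ ¬ inP1 n y then (if G.Adj x y then 1 else 0) else 0) else 0) :=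
    fun x y => by split_ifs <;> simp
  simp only [hL, hR, Finset.sum_add_distrib, Finset.sum_ite_eq', Finset.mem_univ, if_true]
  congr 1
  rw [Finset.sum_comm]
  simp

theorem crossExcess_eq_sum (v : Fin n) (G : SimpleGraph (Fin n)) :
    crossExcess v G = ∑ e ∈ Finset.univ.filter (fun e : Fin n × Fin n => e.1 < e.2),
      if G.Adj e.1 e.2 then (if sameSide n e.1 e.2 then 0 else crossWeight v e) else 0 := by
  have h : ∀ e : Fin n × Fin n,
      (if G.Adj e.1 e.2 then (if sameSide n e.1 e.2 then 0 else crossWeight v e) else 0)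
      = if sameSide n e.1 e.2 then 0 else if G.Adj e.1 e.2 then crossWeight v e else 0 :=
    fun e => by split_ifs <;> rfl
  simp only [h]
  rw [sum_lt_not_sameSide (fun e => if G.Adj e.1 e.2 then crossWeight v e else 0), crossExcess,
    dout_eq_sum, crossCount]
  simp only [Finset.mul_sum, ← Finset.sum_sub_distrib]
  refine Finset.sum_congr rfl fun x _ => Finset.sum_congr rfl fun y _ => ?_
  simp only [crossWeight]
  split_ifs <;> ring

theorem crossExcess_congr {G H : SimpleGraph (Fin n)}
    (h : ∀ v w, ¬ sameSide n v w → (G.Adj v w ↔ H.Adj v w)) (v : Fin n) :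
    crossExcess v G = crossExcess v H := by
  simp only [crossExcess_eq_sum]
  refine Finset.sum_congr rfl fun e _ => ?_
  by_cases hs : sameSide n e.1 e.2
  · simp [hs]
  · simp [hs, h _ _ hs]

theorem sum_inP1_affine (hn : Even n) (v : Fin n) (c d : ℝ) :
    (∑ x, ∑ y, if inP1 n x ∧ ¬ inP1 n y then
      c - d * ((if x = v then 1 else 0) + (if y = v then 1 else 0)) else 0)
      = c * (n / 2) ^ 2 - d * (n / 2) := by
  set p : Fin n → ℝ := fun x => if inP1 n x then 1 else 0
  have hp : ∑ x, p x = n / 2 := sum_ite_inP1 hn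
  have hterm : ∀ x y, (if inP1 n x ∧ ¬ inP1 n y then
      c - d * ((if x = v then 1 else 0) + (if y = v then 1 else 0)) else 0)
      = c * (p x * (1 - p y)) - d * ((if x = v then p x else 0) * (1 - p y))
        - d * (p x * (if y = v then 1 - p y else 0)) := fun x y => by
    simp only [p]
    by_cases hx : inP1 n x <;> by_cases hy : inP1 n y <;> simp [hx, hy]
    split_ifs <;> ring
  have hq : ∑ y, (1 - p y) = n / 2 := by
    rw [Finset.sum_sub_distrib, hp]
    simp
    ring
  simp only [hterm, Finset.sum_sub_distrib, ← Finset.mul_sum, ← Finset.sum_mul, hp, hq,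
    Finset.sum_ite_eq', Finset.mem_univ, if_true]
  ring

theorem sum_crossWeight (hn : Even n) (v : Fin n) :
    (∑ x, ∑ y, if inP1 n x ∧ ¬ inP1 n y then crossWeight v (x, y) else 0) = 0 := by
  have hn0 : (n : ℝ) ≠ 0 := Nat.cast_ne_zero.2 v.pos.ne'
  simp only [crossWeight, sum_inP1_affine hn]
  field_simp
  ring

theorem sum_crossWeight_sq_le (hn : Even n) (v : Fin n) :
    (∑ x, ∑ y, if inP1 n x ∧ ¬ inP1 n y then crossWeight v (x, y) ^ 2 else 0) ≤ 4 * n := by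
  have hn0 : (0 : ℝ) < n := Nat.cast_pos.2 v.pos
  have hsq : ∀ x y, (if inP1 n x ∧ ¬ inP1 n y then crossWeight v (x, y) ^ 2 else 0) =
      if inP1 n x ∧ ¬ inP1 n y then
        (4 / (n : ℝ)) ^ 2 - (16 / (n : ℝ) - 4) * ((if x = v then 1 else 0) + (if y = v then 1 else 0))
      else 0 := fun x y => by
    by_cases hxy : inP1 n x ∧ ¬ inP1 n y
    · have : ¬ (x = v ∧ y = v) := by rintro ⟨rfl, rfl⟩; exact hxy.2 hxy.1
      simp only [hxy, crossWeight]
      by_cases hx : x = v <;> by_cases hy : y = v <;> simp_all <;> ring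
    · simp only [hxy, if_false]
  simp only [hsq, sum_inP1_affine hn]
  have : (4 / (n : ℝ)) ^ 2 * (n / 2) ^ 2 - (16 / n - 4) * (n / 2) = 2 * n - 4 := by
    field_simp
    ring
  linarith

theorem abs_crossWeight_le (hn2 : 2 ≤ n) (v : Fin n) {e : Fin n × Fin n}
    (he : ¬ sameSide n e.1 e.2) : |crossWeight v e| ≤ 2 := by
  have hne : ¬ (e.1 = v ∧ e.2 = v) := by
    rintro ⟨h1, h2⟩
    exact he (by rw [h1, h2, sameSide])
  have h2 : (2 : ℝ) ≤ n := by exact_mod_cast hn2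
  have h4 : 4 / (n : ℝ) ≤ 2 := by rw [div_le_iff₀ (by linarith)]; linarith
  have h0 : 0 ≤ 4 / (n : ℝ) := by positivity
  rw [abs_le, crossWeight]
  by_cases hx : e.1 = v <;> by_cases hy : e.2 = v <;> simp [hx, hy] <;>
    first | exact (hne ⟨hx, hy⟩).elim | constructor <;> linarith

theorem sum_edgeProduct_mul_prod_le {P : Fin n → Fin n → ℝ} {ν : PMF (SimpleGraph (Fin n))}
    (hν : IsEdgeProduct P ν) (g : Fin n × Fin n → ℝ≥0∞) :
    ∑ G, ν G * ∏ e ∈ Finset.univ.filter (fun e : Fin n × Fin n => e.1 < e.2),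
        (if G.Adj e.1 e.2 then g e else 1) ≤
      ∏ e ∈ Finset.univ.filter (fun e : Fin n × Fin n => e.1 < e.2),
        (ENNReal.ofReal (P e.1 e.2) * g e + ENNReal.ofReal (1 - P e.1 e.2)) := by
  set s := Finset.univ.filter (fun e : Fin n × Fin n => e.1 < e.2) with hs
  set φ : SimpleGraph (Fin n) → Finset (Fin n × Fin n) := fun G =>
    s.filter fun e => G.Adj e.1 e.2
  have hφ : Function.Injective φ := fun G H h => by
    have hlt : ∀ x y, x < y → (G.Adj x y ↔ H.Adj x y) := fun x y hxy => by
      have := Finset.ext_iff.1 h (x, y)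
      simpa [φ, hs, hxy] using this
    ext x y
    rcases lt_trichotomy x y with hxy | rfl | hxy
    · exact hlt x y hxy
    · simp
    · rw [G.adj_comm, H.adj_comm, hlt y x hxy]
  rw [Finset.prod_add]
  refine le_trans (le_of_eq ?_) ((Finset.sum_image (s := Finset.univ) (g := φ)
    (f := fun t => (∏ e ∈ t, ENNReal.ofReal (P e.1 e.2) * g e) *
      ∏ e ∈ s \ t, ENNReal.ofReal (1 - P e.1 e.2)) hφ.injOn).symm.le.trans
        (Finset.sum_le_sum_of_subset fun t ht => ?_))
  · refine Finset.sum_congr rfl fun G _ => ?_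
    rw [hν G, ← hs, ← Finset.prod_mul_distrib, ← Finset.filter_not,
      ← Finset.prod_ite]
    refine Finset.prod_congr rfl fun e _ => ?_
    split_ifs <;> simp
  · obtain ⟨G, -, rfl⟩ := Finset.mem_image.1 ht
    exact Finset.mem_powerset.2 (Finset.filter_subset _ _)

theorem ofReal_mul_exp_add_le {p a : ℝ} (hp0 : 0 ≤ p) (hp1 : p ≤ 1) (ha : |a| ≤ 1) :
    ENNReal.ofReal p * ENNReal.ofReal (Real.exp a) + ENNReal.ofReal (1 - p) ≤
      ENNReal.ofReal (Real.exp (p * (a + a ^ 2))) := by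
  rw [← ENNReal.ofReal_mul hp0, ← ENNReal.ofReal_add (by positivity) (by linarith)]
  refine ENNReal.ofReal_le_ofReal ?_
  have h := (abs_le.1 (Real.abs_exp_sub_one_sub_id_le ha)).2
  have h' := Real.add_one_le_exp (p * (a + a ^ 2))
  nlinarith [mul_le_mul_of_nonneg_left h hp0]

theorem sum_mul_exp_crossExcess_le (hn : Even n) (hn2 : 2 ≤ n) {q θ : ℝ} (hq0 : 0 ≤ q)
    (hq1 : q ≤ 1) (hθ0 : 0 ≤ θ) (hθ : θ ≤ 1 / 2) {ν : PMF (SimpleGraph (Fin n))}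
    (hν : IsEdgeProduct (fun v w => if sameSide n v w then 0 else q) ν) (v : Fin n) :
    ∑ G, ν G * ENNReal.ofReal (Real.exp (θ * crossExcess v G)) ≤
      ENNReal.ofReal (Real.exp (4 * (n * q) * θ ^ 2)) := by
  set s := Finset.univ.filter (fun e : Fin n × Fin n => e.1 < e.2)
  set a : Fin n × Fin n → ℝ := fun e => if sameSide n e.1 e.2 then 0 else crossWeight v e with ha
  have habs : ∀ e, |θ * a e| ≤ 1 := fun e => by
    rw [abs_mul, abs_of_nonneg hθ0]
    have : |a e| ≤ 2 := by
      by_cases he : sameSide n e.1 e.2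
      · simp [ha, he]
      · simpa [ha, he] using abs_crossWeight_le hn2 v he
    nlinarith [abs_nonneg (a e)]
  calc ∑ G, ν G * ENNReal.ofReal (Real.exp (θ * crossExcess v G))
      = ∑ G, ν G * ∏ e ∈ s,
          (if G.Adj e.1 e.2 then ENNReal.ofReal (Real.exp (θ * a e)) else 1) := by
        refine Finset.sum_congr rfl fun G _ => ?_
        rw [crossExcess_eq_sum, Finset.mul_sum, Real.exp_sum,
          ENNReal.ofReal_prod_of_nonneg fun _ _ => (Real.exp_pos _).le]
        congr 1
        refine Finset.prod_congr rfl fun e _ => ?_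
        split_ifs <;> simp [*]
    _ ≤ ∏ e ∈ s, (ENNReal.ofReal (if sameSide n e.1 e.2 then 0 else q) *
          ENNReal.ofReal (Real.exp (θ * a e)) +
          ENNReal.ofReal (1 - if sameSide n e.1 e.2 then 0 else q)) :=
        sum_edgeProduct_mul_prod_le hν _
    _ ≤ ∏ e ∈ s, ENNReal.ofReal (Real.exp
          ((if sameSide n e.1 e.2 then 0 else q) * (θ * a e + (θ * a e) ^ 2))) :=
        Finset.prod_le_prod' fun e _ => ofReal_mul_exp_add_le (by split_ifs <;> simp [hq0])
          (by split_ifs <;> simp [hq1]) (habs e)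
    _ = ENNReal.ofReal (Real.exp (∑ e ∈ s, if sameSide n e.1 e.2 then 0 else
          q * (θ * crossWeight v e + (θ * crossWeight v e) ^ 2))) := by
        rw [Real.exp_sum, ENNReal.ofReal_prod_of_nonneg fun _ _ => (Real.exp_pos _).le]
        refine Finset.prod_congr rfl fun e _ => ?_
        by_cases he : sameSide n e.1 e.2 <;> simp [ha, he]
    _ ≤ ENNReal.ofReal (Real.exp (4 * (n * q) * θ ^ 2)) := by
        refine ENNReal.ofReal_le_ofReal (Real.exp_le_exp.2 ?_)
        rw [sum_lt_not_sameSide fun e => q * (θ * crossWeight v e + (θ * crossWeight v e) ^ 2)]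
        have hsplit : ∀ x y, (if inP1 n x ∧ ¬ inP1 n y then
            q * (θ * crossWeight v (x, y) + (θ * crossWeight v (x, y)) ^ 2) else 0) =
            q * θ * (if inP1 n x ∧ ¬ inP1 n y then crossWeight v (x, y) else 0) +
            q * θ ^ 2 * (if inP1 n x ∧ ¬ inP1 n y then crossWeight v (x, y) ^ 2 else 0) :=
          fun x y => by split_ifs <;> ring
        simp only [hsplit, Finset.sum_add_distrib, ← Finset.mul_sum, sum_crossWeight hn]
        nlinarith [mul_le_mul_of_nonneg_left (sum_crossWeight_sq_le hn v)
          (mul_nonneg hq0 (sq_nonneg θ))]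

theorem exists_chernoff_exponent {S L : ℝ} (hS : 0 ≤ S) (hL : 0 < L) :
    ∃ θ, 0 ≤ θ ∧ θ ≤ 1 / 2 ∧ 4 * S * θ ^ 2 - θ * (4 * (Real.sqrt (S * L) + L)) ≤ -L := by
  have hr0 := Real.sqrt_nonneg (S * L)
  have hr := Real.sq_sqrt (mul_nonneg hS hL.le)
  set r := Real.sqrt (S * L)
  rcases le_total S L with h | h
  · exact ⟨1 / 2, by norm_num, le_rfl, by nlinarith⟩
  · have hS0 : 0 < S := hL.trans_le h
    have hrS : r ≤ S := abs_le_of_sq_le_sq' (by nlinarith) hS |>.2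
    refine ⟨r / (2 * S), by positivity, by rw [div_le_iff₀ (by positivity)]; linarith, ?_⟩
    have h1 : 4 * S * (r / (2 * S)) ^ 2 = L := by
      field_simp
      nlinarith
    have h2 : r / (2 * S) * (4 * r) = 2 * L := by
      field_simp
      nlinarith
    have h3 : 0 ≤ r / (2 * S) * (4 * L) := by positivity
    linarith

theorem CrossingProduct.toMeasure_lt_crossExcess_le (hn : Even n) (hn2 : 2 ≤ n) {q δ : ℝ}
    (hq0 : 0 ≤ q) (hq1 : q ≤ 1) (hδ0 : 0 < δ) (hδ1 : δ < 1) {μ : PMF (SimpleGraph (Fin n))}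
    (hμ : CrossingProduct n q μ) (v : Fin n) :
    μ.toMeasure {G | 4 * (Real.sqrt (n * q * Real.log (n / δ)) + Real.log (n / δ))
      < crossExcess v G} ≤ ENNReal.ofReal (δ / n) := by
  obtain ⟨ν, κ, hν, hκ, rfl⟩ := hμ
  have hn0 : (2 : ℝ) ≤ n := by exact_mod_cast hn2
  have hL : 0 < Real.log (n / δ) := Real.log_pos (by rw [lt_div_iff₀ hδ0]; linarith)
  obtain ⟨θ, hθ0, hθ, hexp⟩ := exists_chernoff_exponent (S := n * q) (by positivity) hL
  set T := 4 * (Real.sqrt (n * q * Real.log (n / δ)) + Real.log (n / δ))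
  have hker : ∀ H, (κ H).toMeasure {G | T < crossExcess v G} ≤
      ENNReal.ofReal (Real.exp (θ * crossExcess v H)) * ENNReal.ofReal (Real.exp (-(θ * T))) := by
    intro H
    rw [← ENNReal.ofReal_mul (Real.exp_pos _).le, ← Real.exp_add]
    by_cases hH : T < crossExcess v H
    · refine prob_le_one.trans ?_
      rw [← ENNReal.ofReal_one]
      exact ENNReal.ofReal_le_ofReal (Real.one_le_exp (by nlinarith))
    · rw [((κ H).toMeasure_apply_eq_zero_iff MeasurableSet.of_discrete).2]
      · exact zero_le
      · refine Set.disjoint_left.2 fun G hG hlt => hH ?_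
        rw [← crossExcess_congr (hκ H G hG) v]
        exact hlt
  rw [PMF.toMeasure_bind_apply _ _ _ MeasurableSet.of_discrete, tsum_fintype]
  calc ∑ H, ν H * (κ H).toMeasure {G | T < crossExcess v G}
      ≤ ∑ H, ν H * (ENNReal.ofReal (Real.exp (θ * crossExcess v H)) *
          ENNReal.ofReal (Real.exp (-(θ * T)))) := by gcongr; exact hker _
    _ = (∑ H, ν H * ENNReal.ofReal (Real.exp (θ * crossExcess v H))) *
          ENNReal.ofReal (Real.exp (-(θ * T))) := by simp only [Finset.sum_mul, mul_assoc]
    _ ≤ ENNReal.ofReal (Real.exp (4 * (n * q) * θ ^ 2)) *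
          ENNReal.ofReal (Real.exp (-(θ * T))) := by
        gcongr
        exact sum_mul_exp_crossExcess_le hn hn2 hq0 hq1 hθ0 hθ hν v
    _ ≤ ENNReal.ofReal (δ / n) := by
        rw [← ENNReal.ofReal_mul (Real.exp_pos _).le, ← Real.exp_add]
        refine ENNReal.ofReal_le_ofReal ?_
        calc Real.exp (4 * (n * q) * θ ^ 2 + -(θ * T)) ≤ Real.exp (-Real.log (n / δ)) :=
              Real.exp_le_exp.2 (by linarith)
          _ = δ / n := by rw [Real.exp_neg, Real.exp_log (by positivity), inv_div]

/-- **Lemma (λ₂ versus crossing degrees).**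
If the crossing edges appear independently with probability `q` (internal edges arbitrary),
then there is a universal constant `C > 0` such that for every `δ ∈ (0,1)`, with probability
at least `1 - δ`, every vertex `v` satisfies
`λ₂(L) ≤ 2 dout[v] + C(√(nq log(n/δ)) + log(n/δ))`. -/
theorem lambda2_le_dout :
    ∃ C : ℝ, 0 < C ∧ ∀ n : ℕ, Even n →
      ∀ q δ : ℝ, 0 ≤ q → q ≤ 1 → 0 < δ → δ < 1 →
      ∀ μ : PMF (SimpleGraph (Fin n)), CrossingProduct n q μ →
        1 - ENNReal.ofReal δ ≤ μ.toMeasure {G |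
          ∀ v : Fin n,
            eig (lap G) 1 ≤ 2 * (dout G v : ℝ) +
              C * (Real.sqrt ((n : ℝ) * q * Real.log (n / δ)) + Real.log (n / δ))} := by
  refine ⟨4, by norm_num, fun n hn q δ hq0 hq1 hδ0 hδ1 μ hμ => ?_⟩
  set T := 4 * (Real.sqrt ((n : ℝ) * q * Real.log (n / δ)) + Real.log (n / δ))
  have hbad : μ.toMeasure {G | ∀ v : Fin n, eig (lap G) 1 ≤ 2 * (dout G v : ℝ) + T}ᶜ ≤
      ENNReal.ofReal δ := by
    rcases Nat.eq_zero_or_pos n with rfl | hpos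
    · simp
    have hn2 : 2 ≤ n := by
      obtain ⟨k, rfl⟩ := hn
      omega
    calc μ.toMeasure {G | ∀ v : Fin n, eig (lap G) 1 ≤ 2 * (dout G v : ℝ) + T}ᶜ
        ≤ μ.toMeasure (⋃ v, {G | T < crossExcess v G}) := by
          refine measure_mono fun G hG => ?_
          simp only [Set.mem_compl_iff, Set.mem_ofPred_eq, not_forall, not_le] at hG
          obtain ⟨v, hv⟩ := hG
          refine Set.mem_iUnion.2 ⟨v, ?_⟩
          have := eig_one_lap_le_crossCount G hn hn2
          simp only [Set.mem_ofPred_eq, crossExcess]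
          linarith
      _ ≤ ∑ v, μ.toMeasure {G | T < crossExcess v G} := measure_iUnion_fintype_le _ _
      _ ≤ ∑ _v : Fin n, ENNReal.ofReal (δ / n) :=
          Finset.sum_le_sum fun v _ =>
            hμ.toMeasure_lt_crossExcess_le hn hn2 hq0 hq1 hδ0 hδ1 v
      _ = ENNReal.ofReal δ := by
          have hn0 : (n : ℝ) ≠ 0 := Nat.cast_ne_zero.2 hpos.ne'
          rw [Finset.sum_const, Finset.card_univ, Fintype.card_fin, nsmul_eq_mul,
            ← ENNReal.ofReal_natCast, ← ENNReal.ofReal_mul (Nat.cast_nonneg n),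
            mul_div_cancel₀ _ hn0]
  rw [tsub_le_iff_right, ← prob_add_prob_compl (μ := μ.toMeasure) (MeasurableSet.of_discrete
    (s := {G | ∀ v : Fin n, eig (lap G) 1 ≤ 2 * (dout G v : ℝ) + T}))]
  gcongr

end
end

section
/- Let G be a random graph on n vertices in which each pair (i,j) is an edge independently with probability p_{ij}, and let L be its unnormalized Laplacian. There is a universal constant C > 0 such that for all n sufficiently large and any δ ≥ n^{−10}, with probability at least 1 − δ, ‖L − E[L]‖_op ≤ C·(√( n·(max over pairs (i,j) with p_{ij} ≠ 1 of p_{ij})·log(n/δ) ) + log(n/δ)). -/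
open Matrix MeasureTheory
open scoped BigOperators ENNReal Classical

noncomputable section

variable {n : ℕ}

lemma exists_orthogonal_diagonalization {X : Matrix (Fin n) (Fin n) ℝ} (hX : X.IsHermitian) :
    ∃ (U : Matrix.unitaryGroup (Fin n) ℝ) (a : Fin n → ℝ),
      X = (U : Matrix (Fin n) (Fin n) ℝ) * diagonal a * star (U : Matrix (Fin n) (Fin n) ℝ) := by
  refine ⟨hX.eigenvectorUnitary, hX.eigenvalues, ?_⟩
  conv_lhs => rw [hX.spectral_theorem]
  rw [Unitary.conjStarAlgAut_apply]
  rfl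

lemma conj_diagonal_pow (U : Matrix.unitaryGroup (Fin n) ℝ) (a : Fin n → ℝ) (k : ℕ) :
    ((U : Matrix (Fin n) (Fin n) ℝ) * diagonal a * star (U : Matrix (Fin n) (Fin n) ℝ)) ^ k =
      (U : Matrix (Fin n) (Fin n) ℝ) * diagonal (a ^ k) *
        star (U : Matrix (Fin n) (Fin n) ℝ) := by
  rw [← diagonal_pow]
  have h := map_pow (Unitary.conjStarAlgAut ℝ _ U) (diagonal a : Matrix (Fin n) (Fin n) ℝ) k
  simpa [Unitary.conjStarAlgAut_apply] using h.symm

/-- Traces of mixed products of powers of two symmetric matrices are mixed moments of a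
nonnegative measure on pairs of eigenvalues. -/
lemma exists_trace_pow_mul_pow {X Y : Matrix (Fin n) (Fin n) ℝ} (hX : X.IsHermitian)
    (hY : Y.IsHermitian) :
    ∃ (a b : Fin n → ℝ) (w : Fin n → Fin n → ℝ), (∀ i j, 0 ≤ w i j) ∧
      ∀ k l : ℕ, (X ^ k * Y ^ l).trace = ∑ i, ∑ j, w i j * (a i ^ k * b j ^ l) := by
  obtain ⟨U, a, hU⟩ := exists_orthogonal_diagonalization hX
  obtain ⟨V, b, hV⟩ := exists_orthogonal_diagonalization hY
  set Q : Matrix (Fin n) (Fin n) ℝ := star (U : Matrix (Fin n) (Fin n) ℝ) * V with hQ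
  refine ⟨a, b, fun i j => Q i j ^ 2, fun i j => sq_nonneg _, fun k l => ?_⟩
  have hQs : star Q = star (V : Matrix (Fin n) (Fin n) ℝ) * U := by
    rw [hQ, star_mul, star_star]
  rw [hU, hV, conj_diagonal_pow, conj_diagonal_pow]
  have h : ((U : Matrix (Fin n) (Fin n) ℝ) * diagonal (a ^ k) *
        star (U : Matrix (Fin n) (Fin n) ℝ) * ((V : Matrix (Fin n) (Fin n) ℝ) *
        diagonal (b ^ l) * star (V : Matrix (Fin n) (Fin n) ℝ))).trace =
      (diagonal (a ^ k) * Q * (diagonal (b ^ l) * star Q)).trace := by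
    rw [hQs, hQ, Matrix.mul_assoc, Matrix.mul_assoc, Matrix.trace_mul_comm]
    simp only [Matrix.mul_assoc]
  rw [h]
  simp only [Matrix.trace, Matrix.diag, Matrix.mul_apply (M := diagonal (a ^ k) * Q),
    Matrix.diagonal_mul, Pi.pow_apply, star_apply, star_trivial]
  refine Finset.sum_congr rfl fun i _ => Finset.sum_congr rfl fun j _ => ?_
  ring

lemma pow_mul_pow_le_abs_pow_add (a b : ℝ) (i j : ℕ) :
    a ^ i * b ^ j ≤ |a| ^ (i + j) + |b| ^ (i + j) := by
  have h1 : a ^ i * b ^ j ≤ |a| ^ i * |b| ^ j := by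
    rw [← abs_pow, ← abs_pow, ← abs_mul]
    exact le_abs_self _
  have h2 : |a| ^ i * |b| ^ j ≤ max |a| |b| ^ (i + j) := by
    rw [pow_add]
    gcongr
    · exact le_max_left _ _
    · exact le_max_right _ _
  refine h1.trans (h2.trans ?_)
  rcases max_choice |a| |b| with h | h <;> rw [h]
  · exact le_add_of_nonneg_right (by positivity)
  · exact le_add_of_nonneg_left (by positivity)

lemma sub_mul_pow_sub_pow_le (a b : ℝ) (m : ℕ) :
    (a - b) * (a ^ (2 * m + 1) - b ^ (2 * m + 1)) ≤
      (2 * m + 1) * ((a - b) ^ 2 * (a ^ (2 * m) + b ^ (2 * m))) := by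
  have hterm : ∀ i ∈ Finset.range (2 * m + 1),
      a ^ i * b ^ (2 * m + 1 - 1 - i) ≤ a ^ (2 * m) + b ^ (2 * m) := by
    intro i hi
    have h := pow_mul_pow_le_abs_pow_add a b i (2 * m + 1 - 1 - i)
    rwa [show i + (2 * m + 1 - 1 - i) = 2 * m by
      have := Finset.mem_range.mp hi
      omega, (even_two_mul m).pow_abs, (even_two_mul m).pow_abs] at h
  have hsum := Finset.sum_le_sum hterm
  rw [Finset.sum_const, Finset.card_range, nsmul_eq_mul] at hsum
  rw [← geom_sum₂_mul a b (2 * m + 1)]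
  have h := mul_le_mul_of_nonneg_left hsum (sq_nonneg (a - b))
  push_cast at h ⊢
  linear_combination h

/-- Mean value trace inequality for odd powers of symmetric matrices. -/
lemma trace_sub_mul_pow_sub_pow_le {X Y : Matrix (Fin n) (Fin n) ℝ} (hX : X.IsHermitian)
    (hY : Y.IsHermitian) (m : ℕ) :
    ((X - Y) * (X ^ (2 * m + 1) - Y ^ (2 * m + 1))).trace ≤
      (2 * m + 1) * ((X - Y) * (X - Y) * (X ^ (2 * m) + Y ^ (2 * m))).trace := by
  obtain ⟨a, b, w, hw, htr⟩ := exists_trace_pow_mul_pow hX hY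
  have h1 : ((X - Y) * (X ^ (2 * m + 1) - Y ^ (2 * m + 1))).trace =
      (X ^ (2 * m + 2) * Y ^ 0).trace - (X ^ 1 * Y ^ (2 * m + 1)).trace
        - (X ^ (2 * m + 1) * Y ^ 1).trace + (X ^ 0 * Y ^ (2 * m + 2)).trace := by
    simp only [sub_mul, mul_sub, Matrix.trace_sub, pow_zero, pow_one, mul_one, one_mul]
    rw [← pow_succ', ← pow_succ', Matrix.trace_mul_comm Y]
    ring
  have h2 : ((X - Y) * (X - Y) * (X ^ (2 * m) + Y ^ (2 * m))).trace =
      (X ^ (2 * m + 2) * Y ^ 0).trace - 2 * (X ^ (2 * m + 1) * Y ^ 1).trace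
        + (X ^ (2 * m) * Y ^ 2).trace + (X ^ 2 * Y ^ (2 * m)).trace
        - 2 * (X ^ 1 * Y ^ (2 * m + 1)).trace + (X ^ 0 * Y ^ (2 * m + 2)).trace := by
    have e1 : (X * Y * X ^ (2 * m)).trace = (X ^ (2 * m + 1) * Y ^ 1).trace := by
      rw [Matrix.trace_mul_comm, ← mul_assoc, ← pow_succ, pow_one]
    have e2 : (Y * X * X ^ (2 * m)).trace = (X ^ (2 * m + 1) * Y ^ 1).trace := by
      rw [mul_assoc, ← pow_succ', Matrix.trace_mul_comm, pow_one]
    have e3 : (Y * Y * X ^ (2 * m)).trace = (X ^ (2 * m) * Y ^ 2).trace := by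
      rw [Matrix.trace_mul_comm, pow_two]
    have e4 : (X * Y * Y ^ (2 * m)).trace = (X ^ 1 * Y ^ (2 * m + 1)).trace := by
      rw [mul_assoc, ← pow_succ', pow_one]
    have e5 : (Y * X * Y ^ (2 * m)).trace = (X ^ 1 * Y ^ (2 * m + 1)).trace := by
      rw [mul_assoc, Matrix.trace_mul_comm, mul_assoc, ← pow_succ, pow_one]
    have e6 : X * X * X ^ (2 * m) = X ^ (2 * m + 2) * Y ^ 0 := by
      rw [pow_zero, mul_one, ← pow_two, ← pow_add, add_comm]
    have e7 : Y * Y * Y ^ (2 * m) = X ^ 0 * Y ^ (2 * m + 2) := by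
      rw [pow_zero, one_mul, ← pow_two, ← pow_add, add_comm]
    have e8 : X * X * Y ^ (2 * m) = X ^ 2 * Y ^ (2 * m) := by rw [pow_two]
    simp only [sub_mul, mul_sub, mul_add, Matrix.trace_sub, Matrix.trace_add, e1, e2, e3, e4, e5,
      e6, e7, e8]
    ring
  rw [h1, h2]
  simp only [htr, Finset.mul_sum, ← Finset.sum_sub_distrib, ← Finset.sum_add_distrib]
  refine Finset.sum_le_sum fun i _ => Finset.sum_le_sum fun j _ => ?_
  have h := mul_le_mul_of_nonneg_left (sub_mul_pow_sub_pow_le (a i) (b j) m) (hw i j)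
  have hr : ∀ k, a i ^ (2 * m + k) = a i ^ (2 * m) * a i ^ k := fun k => pow_add _ _ _
  have hs : ∀ k, b j ^ (2 * m + k) = b j ^ (2 * m) * b j ^ k := fun k => pow_add _ _ _
  rw [hr, hs] at h
  simp only [hr, hs]
  linear_combination h

lemma exists_trace_pow_eq_sum {X : Matrix (Fin n) (Fin n) ℝ} (hX : X.IsHermitian) :
    ∃ a : Fin n → ℝ, opNorm X = ‖a‖ ∧ ∀ k : ℕ, (X ^ k).trace = ∑ i, a i ^ k := by
  obtain ⟨U, a, hU⟩ := exists_orthogonal_diagonalization hX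
  refine ⟨a, ?_, fun k => ?_⟩
  · open scoped Matrix.Norms.L2Operator in
    have h1 : opNorm X = ‖X‖ := by
      rw [Matrix.l2_opNorm_def]
      rfl
    rw [h1, hU, Unitary.coe_star.symm, CStarRing.norm_mul_coe_unitary,
      CStarRing.norm_coe_unitary_mul, Matrix.l2_opNorm_diagonal]
  · rw [hU, conj_diagonal_pow, Matrix.trace_mul_comm, ← Matrix.mul_assoc]
    simp [Matrix.trace_diagonal]

lemma trace_pow_nonneg {X : Matrix (Fin n) (Fin n) ℝ} (hX : X.IsHermitian) (m : ℕ) :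
    0 ≤ (X ^ (2 * m)).trace := by
  obtain ⟨a, -, htr⟩ := exists_trace_pow_eq_sum hX
  rw [htr]
  exact Finset.sum_nonneg fun i _ => (even_two_mul m).pow_nonneg _

/-- A lower moment, rescaled by a power of `R`, is controlled by an even moment. -/
lemma pow_mul_trace_pow_le {X : Matrix (Fin n) (Fin n) ℝ} (hX : X.IsHermitian) {R : ℝ}
    {r k m : ℕ} (hrk : r + k = 2 * m) :
    R ^ r * (X ^ k).trace ≤ (X ^ (2 * m)).trace + n * R ^ (2 * m) := by
  obtain ⟨a, -, htr⟩ := exists_trace_pow_eq_sum hX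
  rw [htr, htr, Finset.mul_sum]
  calc ∑ i, R ^ r * a i ^ k ≤ ∑ i, (R ^ (2 * m) + a i ^ (2 * m)) :=
        Finset.sum_le_sum fun i _ => by
          have h := pow_mul_pow_le_abs_pow_add R (a i) r k
          rwa [hrk, (even_two_mul m).pow_abs, (even_two_mul m).pow_abs] at h
    _ = ∑ i, a i ^ (2 * m) + n * R ^ (2 * m) := by
        simp [Finset.sum_add_distrib, add_comm]

lemma opNorm_pow_le_trace {X : Matrix (Fin n) (Fin n) ℝ} (hX : X.IsHermitian) {m : ℕ}
    (hm : m ≠ 0) : opNorm X ^ (2 * m) ≤ (X ^ (2 * m)).trace := by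
  obtain ⟨a, hn, htr⟩ := exists_trace_pow_eq_sum hX
  rw [hn, htr]
  rcases isEmpty_or_nonempty (Fin n) with h | h
  · simp [Subsingleton.elim a 0, hm]
  · obtain ⟨i, hi⟩ : ∃ i, ‖a‖ = ‖a i‖ := by
      obtain ⟨i, hi⟩ := Finite.exists_max fun i => ‖a i‖
      exact ⟨i, le_antisymm ((pi_norm_le_iff_of_nonneg (norm_nonneg _)).2 hi) (norm_le_pi_norm a i)⟩
    rw [hi, Real.norm_eq_abs, (even_two_mul m).pow_abs]
    exact Finset.single_le_sum (f := fun i => a i ^ (2 * m))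
      (fun j _ => (even_two_mul m).pow_nonneg _) (Finset.mem_univ i)

/-- Laplacian of the graph with the single edge `{i, j}` (zero if `i = j`). -/
def edgeLap (i j : Fin n) : Matrix (Fin n) (Fin n) ℝ :=
  vecMulVec (Pi.single i 1 - Pi.single j 1) (Pi.single i 1 - Pi.single j 1)

lemma edgeLap_comm (i j : Fin n) : edgeLap i j = edgeLap j i := by
  ext a b
  simp only [edgeLap, vecMulVec_apply, Pi.sub_apply]
  ring

lemma edgeLap_self (i : Fin n) : edgeLap i i = 0 := by
  simp [edgeLap]

lemma edgeLap_mul_self {i j : Fin n} (hij : i ≠ j) :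
    edgeLap i j * edgeLap i j = (2 : ℝ) • edgeLap i j := by
  rw [edgeLap, vecMulVec_mul_vecMulVec, vecMulVec_smul]
  congr 1
  simp [hij, hij.symm]
  norm_num

lemma trace_edgeLap_mul_mul_transpose (i j : Fin n) (Y : Matrix (Fin n) (Fin n) ℝ) :
    (edgeLap i j * (Y * Yᵀ)).trace = ∑ k, (Y i k - Y j k) ^ 2 := by
  rw [← Matrix.mul_assoc, Matrix.trace_mul_comm, ← Matrix.mul_assoc, edgeLap, mul_vecMulVec,
    vecMulVec_mul, trace_vecMulVec]
  simp [dotProduct, mulVec_sub, sub_vecMul, pow_two]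

lemma pow_two_mul_eq {X : Matrix (Fin n) (Fin n) ℝ} (hX : X.IsHermitian) (m : ℕ) :
    X ^ (2 * m) = X ^ m * (X ^ m)ᵀ := by
  have h : (X ^ m)ᵀ = X ^ m := by
    rw [transpose_pow, ← conjTranspose_eq_transpose_of_trivial, hX.eq]
  rw [h, two_mul, pow_add]

lemma trace_edgeLap_mul_pow_nonneg {X : Matrix (Fin n) (Fin n) ℝ} (hX : X.IsHermitian)
    (i j : Fin n) (m : ℕ) : 0 ≤ (edgeLap i j * X ^ (2 * m)).trace := by
  rw [pow_two_mul_eq hX, trace_edgeLap_mul_mul_transpose]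
  positivity

lemma sum_trace_edgeLap_mul_pow_le {X : Matrix (Fin n) (Fin n) ℝ} (hX : X.IsHermitian)
    (m : ℕ) :
    ∑ i, ∑ j, (edgeLap i j * X ^ (2 * m)).trace ≤ 4 * n * (X ^ (2 * m)).trace := by
  rw [pow_two_mul_eq hX]
  set Y := X ^ m
  simp only [trace_edgeLap_mul_mul_transpose]
  have htr : (Y * Yᵀ).trace = ∑ i, ∑ k, Y i k ^ 2 := by
    simp [Matrix.trace, Matrix.mul_apply, pow_two]
  rw [htr]
  calc ∑ i, ∑ j, ∑ k, (Y i k - Y j k) ^ 2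
      ≤ ∑ i, ∑ j, (2 * ∑ k, Y i k ^ 2 + 2 * ∑ k, Y j k ^ 2) := by
        refine Finset.sum_le_sum fun i _ => Finset.sum_le_sum fun j _ => ?_
        rw [Finset.mul_sum, Finset.mul_sum, ← Finset.sum_add_distrib]
        exact Finset.sum_le_sum fun k _ => by nlinarith [sq_nonneg (Y i k + Y j k)]
    _ = 4 * n * ∑ i, ∑ k, Y i k ^ 2 := by
        simp only [Finset.sum_add_distrib, ← Finset.mul_sum, Finset.sum_const, Finset.card_univ,
          Fintype.card_fin, nsmul_eq_mul]
        ring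

lemma wlap_eq_sum_edgeLap {W : Matrix (Fin n) (Fin n) ℝ} (hW : ∀ i j, W i j = W j i) :
    wlap W = (1 / 2 : ℝ) • ∑ i, ∑ j, W i j • edgeLap i j := by
  ext a b
  simp only [wlap, edgeLap, Matrix.sub_apply, Matrix.smul_apply, Matrix.sum_apply,
    vecMulVec_apply, Pi.sub_apply, Pi.single_apply, smul_eq_mul, sub_mul, mul_sub,
    Finset.sum_sub_distrib, Matrix.diagonal_apply]
  by_cases hab : a = b
  · subst hab
    simp [hW _ a]
    ring
  · simp [hab, hW b a]
    ring

/-- The graph obtained by switching the status of the pair `{i, j}`. -/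
def flipEdge (i j : Fin n) (G : SimpleGraph (Fin n)) : SimpleGraph (Fin n) :=
  symmDiff G (SimpleGraph.edge i j)

lemma flipEdge_involutive (i j : Fin n) : Function.Involutive (flipEdge i j) := fun _ =>
  symmDiff_symmDiff_cancel_right _ _

lemma flipEdge_adj (i j : Fin n) (G : SimpleGraph (Fin n)) (a b : Fin n) :
    (flipEdge i j G).Adj a b ↔ Xor (G.Adj a b) ((SimpleGraph.edge i j).Adj a b) := by
  simp [flipEdge, symmDiff, Xor]

lemma flipEdge_adj_self {i j : Fin n} (hij : i ≠ j) (G : SimpleGraph (Fin n)) :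
    (flipEdge i j G).Adj i j ↔ ¬ G.Adj i j := by
  simp [flipEdge_adj, SimpleGraph.edge_adj, hij, Xor]

lemma flipEdge_adj_of_ne {i j a b : Fin n} (h : ¬ (a = i ∧ b = j ∨ a = j ∧ b = i))
    (G : SimpleGraph (Fin n)) : (flipEdge i j G).Adj a b ↔ G.Adj a b := by
  simp [flipEdge_adj, SimpleGraph.edge_adj, h, Xor]

/-- The centred Laplacian. -/
def centredLap (P : Fin n → Fin n → ℝ) (G : SimpleGraph (Fin n)) : Matrix (Fin n) (Fin n) ℝ :=
  lap G - expLap P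

lemma wlap_sub (V W : Matrix (Fin n) (Fin n) ℝ) : wlap V - wlap W = wlap (V - W) := by
  ext a b
  by_cases h : a = b
  · subst h
    simp [wlap]
    ring
  · simp [wlap, h]
    ring

lemma adjM_symm (G : SimpleGraph (Fin n)) (i j : Fin n) : adjM G i j = adjM G j i := by
  simp [adjM, G.adj_comm]

lemma offP_symm {P : Fin n → Fin n → ℝ} (hP : ∀ i j, P i j = P j i) (i j : Fin n) :
    offP P i j = offP P j i := by
  simp [offP, hP i j, eq_comm]

lemma centredLap_eq_sum {P : Fin n → Fin n → ℝ} (hP : ∀ i j, P i j = P j i)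
    (G : SimpleGraph (Fin n)) :
    centredLap P G = (1 / 2 : ℝ) • ∑ i, ∑ j, (adjM G i j - offP P i j) • edgeLap i j := by
  rw [centredLap, lap, expLap, wlap_sub, wlap_eq_sum_edgeLap]
  · rfl
  · intro i j
    simp only [Matrix.sub_apply]
    rw [adjM_symm, offP_symm hP]

lemma centredLap_isHermitian {P : Fin n → Fin n → ℝ} (hP : ∀ i j, P i j = P j i)
    (G : SimpleGraph (Fin n)) : (centredLap P G).IsHermitian := by
  ext a b
  by_cases h : a = b
  · subst h
    simp
  · simp [centredLap, lap, expLap, wlap, h, Ne.symm h, adjM_symm G b a, offP_symm hP b a]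

lemma centredLap_flipEdge_sub {i j : Fin n} (hij : i ≠ j) {P : Fin n → Fin n → ℝ}
    {G : SimpleGraph (Fin n)} (hG : ¬ G.Adj i j) :
    centredLap P (flipEdge i j G) - centredLap P G = edgeLap i j := by
  have h : adjM (flipEdge i j G) - adjM G = Matrix.single i j 1 + Matrix.single j i 1 := by
    ext a b
    by_cases h : a = i ∧ b = j ∨ a = j ∧ b = i
    · rcases h with ⟨rfl, rfl⟩ | ⟨rfl, rfl⟩
      · simp [adjM, flipEdge_adj_self hij, hG, hij.symm]
      · have h1 := (flipEdge_adj_self hij G).2 hG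
        have h2 : ¬ G.Adj a b := fun h => hG h.symm
        simp [adjM, h1.symm, h2, hij.symm]
    · have h3 : ¬ (i = a ∧ j = b) := by grind
      have h4 : ¬ (j = a ∧ i = b) := by grind
      simp [adjM, flipEdge_adj_of_ne h, h3, h4]
  rw [centredLap, centredLap, sub_sub_sub_cancel_right, lap, lap, wlap_sub, h,
    wlap_eq_sum_edgeLap]
  · simp only [Matrix.add_apply, Matrix.single_apply, add_smul, Finset.sum_add_distrib, ite_smul,
      one_smul, zero_smul, ite_and, Finset.sum_ite_eq, Finset.mem_univ, if_true, Finset.sum_ite_irrel,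
      Finset.sum_const_zero, edgeLap_comm j i]
    rw [← two_smul ℝ, smul_smul]
    norm_num
  · intro a b
    simp only [Matrix.add_apply, Matrix.single_apply]
    rw [add_comm]
    congr 2 <;> simp [and_comm]

/-- Probability of the graph `G` when each pair is an edge independently. -/
def edgeWeight (P : Fin n → Fin n → ℝ) (G : SimpleGraph (Fin n)) : ℝ :=
  ∏ e ∈ Finset.univ.filter (fun e : Fin n × Fin n => e.1 < e.2),
    (if G.Adj e.1 e.2 then P e.1 e.2 else 1 - P e.1 e.2)

lemma edgeWeight_nonneg {P : Fin n → Fin n → ℝ} (hP : ∀ i j, 0 ≤ P i j ∧ P i j ≤ 1)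
    (G : SimpleGraph (Fin n)) : 0 ≤ edgeWeight P G := by
  refine Finset.prod_nonneg fun e _ => ?_
  split_ifs
  · exact (hP _ _).1
  · exact sub_nonneg.2 (hP _ _).2

lemma edgeWeight_eq_mul {P : Fin n → Fin n → ℝ} {i j : Fin n} (hij : i < j)
    (G : SimpleGraph (Fin n)) :
    edgeWeight P G = (if G.Adj i j then P i j else 1 - P i j) *
      ∏ e ∈ (Finset.univ.filter (fun e : Fin n × Fin n => e.1 < e.2)).erase (i, j),
        (if G.Adj e.1 e.2 then P e.1 e.2 else 1 - P e.1 e.2) := by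
  rw [edgeWeight, ← Finset.mul_prod_erase _ _ (a := (i, j)) (by simpa using hij)]

lemma exists_edgeWeight_factor {P : Fin n → Fin n → ℝ} {i j : Fin n} (hij : i < j)
    {G : SimpleGraph (Fin n)} (hG : ¬ G.Adj i j) :
    ∃ c, edgeWeight P G = (1 - P i j) * c ∧ edgeWeight P (flipEdge i j G) = P i j * c := by
  refine ⟨_, by rw [edgeWeight_eq_mul hij, if_neg hG], ?_⟩
  rw [edgeWeight_eq_mul hij, if_pos ((flipEdge_adj_self hij.ne G).2 hG)]
  congr 1
  refine Finset.prod_congr rfl fun e he => ?_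
  simp only [Finset.mem_erase, Finset.mem_filter, Finset.mem_univ, true_and] at he
  have h : ¬ (e.1 = i ∧ e.2 = j ∨ e.1 = j ∧ e.2 = i) := by
    rintro (⟨h1, h2⟩ | ⟨h1, h2⟩)
    · exact he.1 (Prod.ext h1 h2)
    · have := he.2
      rw [h1, h2] at this
      exact lt_asymm hij this
  simp only [flipEdge_adj_of_ne h]

lemma sum_le_sum_of_involutive {α : Type*} [Fintype α] {σ : α → α} (hσ : σ.Involutive)
    {f g : α → ℝ} (h : ∀ x, f x + f (σ x) ≤ g x + g (σ x)) : ∑ x, f x ≤ ∑ x, g x := by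
  have hf : ∑ x, f (σ x) = ∑ x, f x := Equiv.sum_comp hσ.toPerm f
  have hg : ∑ x, g (σ x) = ∑ x, g x := Equiv.sum_comp hσ.toPerm g
  have hs := Finset.sum_le_sum fun x (_ : x ∈ Finset.univ) => h x
  rw [Finset.sum_add_distrib, Finset.sum_add_distrib, hf, hg] at hs
  linarith

/-- Resampling a single pair bounds its contribution to the odd moment by an even moment. -/
lemma sum_edgeWeight_mul_trace_le {P : Fin n → Fin n → ℝ} {pm : ℝ}
    (hsymm : ∀ i j, P i j = P j i) (hP : ∀ i j, 0 ≤ P i j ∧ P i j ≤ 1) (hpm : 0 ≤ pm)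
    (hle : ∀ i j : Fin n, i ≠ j → P i j ≠ 1 → P i j ≤ pm) (m : ℕ) {i j : Fin n} (hij : i < j) :
    ∑ G : SimpleGraph (Fin n), edgeWeight P G *
        ((adjM G i j - offP P i j) * (edgeLap i j * centredLap P G ^ (2 * m + 1)).trace) ≤
      ∑ G : SimpleGraph (Fin n), edgeWeight P G *
        ((adjM G i j - offP P i j + 2 * pm) *
          ((2 * m + 1) * (2 * (edgeLap i j * centredLap P G ^ (2 * m)).trace))) := by
  refine sum_le_sum_of_involutive (flipEdge_involutive i j) fun G => ?_
  wlog hG : ¬ G.Adj i j generalizing G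
  · have h := this (flipEdge i j G) (by rw [flipEdge_adj_self hij.ne]; simpa using hG)
    rw [flipEdge_involutive i j G] at h
    linarith
  obtain ⟨c, hc0, hc1⟩ := exists_edgeWeight_factor (P := P) hij hG
  set G' := flipEdge i j G with hG'
  have hadj : G'.Adj i j := (flipEdge_adj_self hij.ne G).2 hG
  have hA0 : adjM G i j = 0 := by simp [adjM, hG]
  have hA1 : adjM G' i j = 1 := by simp [adjM, hadj]
  have hoff : offP P i j = P i j := by simp [offP, hij.ne]
  have hmv := trace_sub_mul_pow_sub_pow_le (centredLap_isHermitian hsymm G')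
    (centredLap_isHermitian hsymm G) m
  rw [centredLap_flipEdge_sub hij.ne hG, edgeLap_mul_self hij.ne, mul_sub, Matrix.trace_sub,
    mul_add, Matrix.trace_add, Matrix.smul_mul, Matrix.smul_mul, Matrix.trace_smul,
    Matrix.trace_smul, smul_eq_mul, smul_eq_mul] at hmv
  have hg0 := trace_edgeLap_mul_pow_nonneg (centredLap_isHermitian hsymm G) i j m
  have hg1 := trace_edgeLap_mul_pow_nonneg (centredLap_isHermitian hsymm G') i j m
  have hw0 := edgeWeight_nonneg hP G
  have hw1 := edgeWeight_nonneg hP G'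
  set g0 := (edgeLap i j * centredLap P G ^ (2 * m)).trace
  set g1 := (edgeLap i j * centredLap P G' ^ (2 * m)).trace
  set f0 := (edgeLap i j * centredLap P G ^ (2 * m + 1)).trace
  set f1 := (edgeLap i j * centredLap P G' ^ (2 * m + 1)).trace
  have hbal : edgeWeight P G' * (1 - P i j) = edgeWeight P G * P i j := by
    rw [hc0, hc1]
    ring
  have hwp : edgeWeight P G * P i j ≤ edgeWeight P G * pm := by
    by_cases hp : P i j = 1
    · rw [hc0, hp]
      simp
    · exact mul_le_mul_of_nonneg_left (hle i j hij.ne hp) hw0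
  have hc : 0 ≤ edgeWeight P G * P i j := mul_nonneg hw0 (hP i j).1
  have h1 := mul_le_mul_of_nonneg_left hmv hc
  have h2 : 0 ≤ edgeWeight P G' * pm * ((2 * m + 1) * (2 * g1)) := by positivity
  have h3 := mul_le_mul_of_nonneg_right hwp (by positivity : 0 ≤ (2 * m + 1) * (2 * g0))
  rw [hA0, hA1, hoff]
  linear_combination h1 + 2 * h2 + 2 * h3 + (f1 - (2 * m + 1) * (2 * g1)) * hbal

/-- Moment recursion for the centred Laplacian. -/
lemma sum_edgeWeight_mul_trace_pow_le {P : Fin n → Fin n → ℝ} {pm : ℝ}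
    (hsymm : ∀ i j, P i j = P j i) (hP : ∀ i j, 0 ≤ P i j ∧ P i j ≤ 1) (hpm : 0 ≤ pm)
    (hle : ∀ i j : Fin n, i ≠ j → P i j ≠ 1 → P i j ≤ pm) (m : ℕ) :
    ∑ G : SimpleGraph (Fin n), edgeWeight P G * (centredLap P G ^ (2 * m + 2)).trace ≤
      ∑ G : SimpleGraph (Fin n), edgeWeight P G * ((2 * m + 1) *
        (2 * (centredLap P G ^ (2 * m + 1)).trace +
          8 * n * pm * (centredLap P G ^ (2 * m)).trace)) := by
  have hpair : ∀ i j : Fin n,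
      ∑ G : SimpleGraph (Fin n), edgeWeight P G *
        ((adjM G i j - offP P i j) * (edgeLap i j * centredLap P G ^ (2 * m + 1)).trace) ≤
      ∑ G : SimpleGraph (Fin n), edgeWeight P G *
        ((adjM G i j - offP P i j + 2 * pm) *
          ((2 * m + 1) * (2 * (edgeLap i j * centredLap P G ^ (2 * m)).trace))) := by
    intro i j
    rcases lt_trichotomy i j with h | rfl | h
    · exact sum_edgeWeight_mul_trace_le hsymm hP hpm hle m h
    · simp [edgeLap_self]
    · simpa only [edgeLap_comm j i, adjM_symm _ j i, offP_symm hsymm j i] using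
        sum_edgeWeight_mul_trace_le hsymm hP hpm hle m h
  have hexp : ∀ (G : SimpleGraph (Fin n)) (k : ℕ), (centredLap P G ^ (k + 1)).trace =
      (1 / 2) * ∑ i, ∑ j, (adjM G i j - offP P i j) *
        (edgeLap i j * centredLap P G ^ k).trace := by
    intro G k
    rw [pow_succ']
    conv_lhs => enter [1, 1]; rw [centredLap_eq_sum hsymm]
    simp [Finset.sum_mul, Matrix.trace_sum]
  calc ∑ G : SimpleGraph (Fin n), edgeWeight P G * (centredLap P G ^ (2 * m + 2)).trace
      = (1 / 2) * ∑ i, ∑ j, ∑ G : SimpleGraph (Fin n), edgeWeight P G *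
        ((adjM G i j - offP P i j) * (edgeLap i j * centredLap P G ^ (2 * m + 1)).trace) := by
        simp_rw [hexp, Finset.mul_sum]
        rw [Finset.sum_comm]
        refine Finset.sum_congr rfl fun i _ => ?_
        rw [Finset.sum_comm]
        refine Finset.sum_congr rfl fun j _ => Finset.sum_congr rfl fun G _ => ?_
        ring
    _ ≤ (1 / 2) * ∑ i, ∑ j, ∑ G : SimpleGraph (Fin n), edgeWeight P G *
        ((adjM G i j - offP P i j + 2 * pm) *
          ((2 * m + 1) * (2 * (edgeLap i j * centredLap P G ^ (2 * m)).trace))) :=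
        mul_le_mul_of_nonneg_left (Finset.sum_le_sum fun i _ => Finset.sum_le_sum fun j _ =>
          hpair i j) (by norm_num)
    _ = ∑ G : SimpleGraph (Fin n), edgeWeight P G * ((2 * m + 1) *
        (2 * (centredLap P G ^ (2 * m + 1)).trace +
          2 * pm * ∑ i, ∑ j, (edgeLap i j * centredLap P G ^ (2 * m)).trace)) := by
        rw [Finset.mul_sum]
        simp_rw [hexp, Finset.mul_sum, ← Finset.sum_add_distrib, Finset.mul_sum]
        conv_rhs => rw [Finset.sum_comm]
        refine Finset.sum_congr rfl fun i _ => ?_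
        conv_rhs => rw [Finset.sum_comm]
        refine Finset.sum_congr rfl fun j _ => Finset.sum_congr rfl fun G _ => ?_
        ring
    _ ≤ _ := by
        refine Finset.sum_le_sum fun G _ =>
          mul_le_mul_of_nonneg_left ?_ (edgeWeight_nonneg hP G)
        have h := mul_le_mul_of_nonneg_left
          (sum_trace_edgeLap_mul_pow_le (centredLap_isHermitian hsymm G) m)
          (by positivity : 0 ≤ 2 * pm)
        refine mul_le_mul_of_nonneg_left ?_ (by positivity)
        linarith

lemma sum_edgeWeight_mul_trace_pow_le_mul_pow {P : Fin n → Fin n → ℝ} {pm : ℝ}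
    (hsymm : ∀ i j, P i j = P j i) (hP : ∀ i j, 0 ≤ P i j ∧ P i j ≤ 1) (hpm : 0 ≤ pm)
    (hle : ∀ i j : Fin n, i ≠ j → P i j ≠ 1 → P i j ≤ pm)
    (hsum : ∑ G : SimpleGraph (Fin n), edgeWeight P G = 1) (m : ℕ) {R : ℝ} (hR : 0 < R)
    (hR1 : 8 * (2 * m + 1) ≤ R) (hR2 : 32 * (2 * m + 1) * (n * pm) ≤ R ^ 2) :
    ∑ G : SimpleGraph (Fin n), edgeWeight P G * (centredLap P G ^ (2 * (m + 1))).trace ≤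
      n * R ^ (2 * (m + 1)) := by
  set M := ∑ G : SimpleGraph (Fin n), edgeWeight P G * (centredLap P G ^ (2 * (m + 1))).trace
    with hM
  have hrec : M ≤ _ := sum_edgeWeight_mul_trace_pow_le hsymm hP hpm hle m
  have hpt : ∀ G : SimpleGraph (Fin n), edgeWeight P G * ((2 * m + 1) *
        (2 * (centredLap P G ^ (2 * m + 1)).trace +
          8 * n * pm * (centredLap P G ^ (2 * m)).trace)) ≤
      edgeWeight P G * ((1 / 2) * ((centredLap P G ^ (2 * (m + 1))).trace +
        n * R ^ (2 * (m + 1)))) := by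
    intro G
    refine mul_le_mul_of_nonneg_left ?_ (edgeWeight_nonneg hP G)
    have hX := centredLap_isHermitian hsymm G
    have h1 := pow_mul_trace_pow_le hX (R := R) (r := 1) (k := 2 * m + 1) (m := m + 1) (by ring)
    have h0 := pow_mul_trace_pow_le hX (R := R) (r := 2) (k := 2 * m) (m := m + 1) (by ring)
    have hn := trace_pow_nonneg hX m
    have hS : 0 ≤ (centredLap P G ^ (2 * (m + 1))).trace + n * R ^ (2 * (m + 1)) :=
      add_nonneg (trace_pow_nonneg hX (m + 1)) (by positivity)
    set S := (centredLap P G ^ (2 * (m + 1))).trace + n * R ^ (2 * (m + 1))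
    set t := (centredLap P G ^ (2 * m + 1)).trace
    set u := (centredLap P G ^ (2 * m)).trace
    have ht : 8 * (2 * m + 1) * t ≤ S := by
      rcases le_total t 0 with h | h
      · exact (mul_nonpos_of_nonneg_of_nonpos (by positivity) h).trans hS
      · rw [pow_one] at h1
        exact (mul_le_mul_of_nonneg_right hR1 h).trans h1
    have hu := (mul_le_mul_of_nonneg_right hR2 hn).trans h0
    linarith
  have hfin := hrec.trans (Finset.sum_le_sum fun G _ => hpt G)
  have hsplit : ∑ G : SimpleGraph (Fin n), edgeWeight P G *
      ((1 / 2) * ((centredLap P G ^ (2 * (m + 1))).trace + n * R ^ (2 * (m + 1)))) =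
      (1 / 2) * M + (1 / 2) * (n * R ^ (2 * (m + 1))) := by
    have h : ∑ G : SimpleGraph (Fin n), edgeWeight P G * (n * R ^ (2 * (m + 1))) =
        n * R ^ (2 * (m + 1)) := by
      rw [← Finset.sum_mul, hsum, one_mul]
    rw [← mul_add, ← h, hM, ← Finset.sum_add_distrib, Finset.mul_sum, h]
    exact Finset.sum_congr rfl fun G _ => by ring
  rw [hsplit] at hfin
  linarith

lemma IsEdgeProduct.apply_eq {P : Fin n → Fin n → ℝ} {μ : PMF (SimpleGraph (Fin n))}
    (hP : ∀ i j, 0 ≤ P i j ∧ P i j ≤ 1) (hμ : IsEdgeProduct P μ) (G : SimpleGraph (Fin n)) :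
    μ G = ENNReal.ofReal (edgeWeight P G) := by
  rw [hμ G, edgeWeight, ENNReal.ofReal_prod_of_nonneg]
  · exact Finset.prod_congr rfl fun e _ => (apply_ite ENNReal.ofReal _ _ _).symm
  · intro e _
    split_ifs
    · exact (hP _ _).1
    · exact sub_nonneg.2 (hP _ _).2

lemma IsEdgeProduct.sum_edgeWeight {P : Fin n → Fin n → ℝ} {μ : PMF (SimpleGraph (Fin n))}
    (hP : ∀ i j, 0 ≤ P i j ∧ P i j ≤ 1) (hμ : IsEdgeProduct P μ) :
    ∑ G : SimpleGraph (Fin n), edgeWeight P G = 1 := by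
  have h := μ.tsum_coe
  simp_rw [tsum_fintype, hμ.apply_eq hP] at h
  rwa [← ENNReal.ofReal_sum_of_nonneg fun G _ => edgeWeight_nonneg hP G, ENNReal.ofReal_eq_one] at h

/-- Markov's inequality for even Schatten norms. -/
lemma IsEdgeProduct.toMeasure_opNorm_gt_le {P : Fin n → Fin n → ℝ}
    {μ : PMF (SimpleGraph (Fin n))} (hsymm : ∀ i j, P i j = P j i)
    (hP : ∀ i j, 0 ≤ P i j ∧ P i j ≤ 1) (hμ : IsEdgeProduct P μ) {m : ℕ} (hm : m ≠ 0) {t B : ℝ}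
    (ht : 0 < t)
    (hB : ∑ G : SimpleGraph (Fin n), edgeWeight P G * (centredLap P G ^ (2 * m)).trace ≤
      B * t ^ (2 * m)) :
    μ.toMeasure {G | t < opNorm (centredLap P G)} ≤ ENNReal.ofReal B := by
  rw [PMF.toMeasure_apply_fintype]
  calc ∑ G, Set.indicator {G | t < opNorm (centredLap P G)} μ G
      ≤ ∑ G, ENNReal.ofReal
          (edgeWeight P G * (centredLap P G ^ (2 * m)).trace / t ^ (2 * m)) := by
        refine Finset.sum_le_sum fun G _ => ?_
        refine Set.indicator_apply_le' (fun hG => ?_) fun _ => zero_le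
        rw [hμ.apply_eq hP]
        refine ENNReal.ofReal_le_ofReal ?_
        rw [le_div_iff₀ (by positivity)]
        refine mul_le_mul_of_nonneg_left ?_ (edgeWeight_nonneg hP G)
        exact (pow_le_pow_left₀ ht.le (le_of_lt hG) _).trans
          (opNorm_pow_le_trace (centredLap_isHermitian hsymm G) hm)
    _ = ENNReal.ofReal (∑ G,
          edgeWeight P G * (centredLap P G ^ (2 * m)).trace / t ^ (2 * m)) := by
        refine (ENNReal.ofReal_sum_of_nonneg fun G _ => ?_).symm
        exact div_nonneg (mul_nonneg (edgeWeight_nonneg hP G)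
          (trace_pow_nonneg (centredLap_isHermitian hsymm G) m)) (by positivity)
    _ ≤ ENNReal.ofReal B := by
        refine ENNReal.ofReal_le_ofReal ?_
        rwa [← Finset.sum_div, div_le_iff₀ (by positivity)]

/-- **Lemma (Laplacian concentration).**
For a nonhomogeneous Erdős–Rényi graph with edge probabilities `p_{ij}`, there is a universal
constant `C > 0` such that for all sufficiently large `n` and any `δ ≥ n⁻¹⁰`, with probability
at least `1 - δ`,
`‖L - E[L]‖_op ≤ C(√(n·(max_{(i,j): p_{ij} ≠ 1} p_{ij})·log(n/δ)) + log(n/δ))`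
(stated for every upper bound `pm` on the `p_{ij}` that are not equal to `1`). -/
theorem laplacian_concentration :
    ∃ C : ℝ, 0 < C ∧ ∃ N : ℕ, ∀ n : ℕ, N ≤ n →
      ∀ (P : Fin n → Fin n → ℝ) (μ : PMF (SimpleGraph (Fin n))) (δ pm : ℝ),
        (∀ i j, P i j = P j i) → (∀ i j, 0 ≤ P i j ∧ P i j ≤ 1) →
        IsEdgeProduct P μ →
        1 / (n : ℝ) ^ 10 ≤ δ →
        0 ≤ pm → (∀ i j : Fin n, i ≠ j → P i j ≠ 1 → P i j ≤ pm) →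
        1 - ENNReal.ofReal δ ≤ μ.toMeasure {G |
          opNorm (lap G - expLap P) ≤
            C * (Real.sqrt ((n : ℝ) * pm * Real.log (n / δ)) + Real.log (n / δ))} := by
  refine ⟨120, by norm_num, 3, fun n hn P μ δ pm hsymm hP hμ hδ hpm hle => ?_⟩
  rcases le_or_gt 1 δ with h1 | h1
  · rw [tsub_eq_zero_of_le (ENNReal.one_le_ofReal.2 h1)]
    exact zero_le
  have hn3 : (3 : ℝ) ≤ n := by exact_mod_cast hn
  have hn0 : (0 : ℝ) < n := by linarith
  have hδ0 : 0 < δ := lt_of_lt_of_le (by positivity) hδ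
  set ℓ := Real.log (n / δ) with hℓ
  have hexp : Real.exp ℓ = n / δ := Real.exp_log (by positivity)
  have hℓ1 : 1 ≤ ℓ := by
    rw [hℓ, Real.le_log_iff_exp_le (by positivity), le_div_iff₀ hδ0]
    nlinarith [Real.exp_one_lt_d9, Real.exp_pos 1]
  set m := ⌈ℓ⌉₊ with hm
  have hm1 : ℓ ≤ m := Nat.le_ceil ℓ
  have hm2 : (m : ℝ) < ℓ + 1 := Nat.ceil_lt_add_one (by linarith)
  have hm0 : (0 : ℝ) ≤ m := Nat.cast_nonneg m
  set q := Real.sqrt (n * pm * ℓ) with hq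
  have hq0 : 0 ≤ q := Real.sqrt_nonneg _
  have hqs : q ^ 2 = n * pm * ℓ := Real.sq_sqrt (by positivity)
  set R := 40 * (q + ℓ) with hR
  have hR0 : 0 < R := by positivity
  have hR1 : 8 * (2 * m + 1) ≤ R := by linarith
  have hR2 : 32 * (2 * m + 1) * (n * pm) ≤ R ^ 2 := by
    have h5 : (2 * m + 1 : ℝ) * (n * pm) ≤ 5 * ℓ * (n * pm) :=
      mul_le_mul_of_nonneg_right (by linarith) (by positivity)
    nlinarith [mul_nonneg hq0 (by linarith : 0 ≤ ℓ), sq_nonneg ℓ]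
  have hmom := sum_edgeWeight_mul_trace_pow_le_mul_pow hsymm hP hpm hle
    (hμ.sum_edgeWeight hP) m hR0 hR1 hR2
  have hpow : (n : ℝ) ≤ δ * 3 ^ (2 * (m + 1)) := by
    have h3 : Real.exp ℓ ≤ 3 ^ (2 * (m + 1)) :=
      calc Real.exp ℓ ≤ Real.exp ((2 * (m + 1) : ℕ) * 1) := by
            refine Real.exp_le_exp.2 ?_
            push_cast
            linarith
        _ = Real.exp 1 ^ (2 * (m + 1)) := Real.exp_nat_mul _ _
        _ ≤ 3 ^ (2 * (m + 1)) :=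
            pow_le_pow_left₀ (Real.exp_pos 1).le (by linarith [Real.exp_one_lt_d9]) _
    rw [hexp, div_le_iff₀ hδ0] at h3
    linarith
  have hB : ∑ G : SimpleGraph (Fin n),
      edgeWeight P G * (centredLap P G ^ (2 * (m + 1))).trace ≤ δ * (3 * R) ^ (2 * (m + 1)) := by
    refine hmom.trans ?_
    rw [mul_pow 3 R, ← mul_assoc]
    exact mul_le_mul_of_nonneg_right hpow (by positivity)
  have hbad := hμ.toMeasure_opNorm_gt_le hsymm hP (Nat.succ_ne_zero m)
    (by positivity : 0 < 3 * R) hB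
  have hcompl : {G : SimpleGraph (Fin n) | opNorm (lap G - expLap P) ≤ 120 * (q + ℓ)} =
      {G | 3 * R < opNorm (centredLap P G)}ᶜ := by
    ext G
    simp only [Set.mem_ofPred_eq, Set.mem_compl_iff, not_lt, centredLap, hR]
    rw [← mul_assoc]
    norm_num
  rw [hcompl, prob_compl_eq_one_sub (MeasurableSpace.measurableSet_top)]
  exact tsub_le_tsub_left hbad 1

end
end
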